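/- arXiv:0804.2032 — 2 statements merged into one kernel-verified Lean document; each statement's English description precedes it below -/
import Mathlib

section
/- Let D be a digraph on n vertices that has at least one out-branching and contains no useless arcs, and suppose that every vertex of D has in-degree at least 3, or that D is an oriented graph in which every vertex has in-degree at least 2. Then ℓ_s(D) ≥ (1/12)·√n. -/
/-- A (finite, loopless) directed graph, given by its vertex set and arc set. -/
structure DirGraph (V : Type) where
  verts : Set V
  arcs : Set (V × V)

namespace DirGraph

variable {V : Type}

/-- Every arc joins two distinct vertices of the digraph. -/
def WellFormed (D : DirGraph V) : Prop :=
  ∀ a ∈ D.arcs, a.1 ∈ D.verts ∧ a.2 ∈ D.verts ∧ a.1 ≠ a.2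

/-- `T` is a subgraph of `D`. -/
def IsSubgraph (T D : DirGraph V) : Prop :=
  T.verts ⊆ D.verts ∧ T.arcs ⊆ D.arcs

/-- The in-degree of a vertex. -/
noncomputable def inDeg (D : DirGraph V) (v : V) : ℕ :=
  {a ∈ D.arcs | a.2 = v}.ncard

/-- The out-degree of a vertex. -/
noncomputable def outDeg (D : DirGraph V) (v : V) : ℕ :=
  {a ∈ D.arcs | a.1 = v}.ncard

/-- A dipath in `D`: a nonempty list of distinct vertices of `D`,
consecutive ones being joined by arcs of `D`. -/
def IsDipath (D : DirGraph V) (l : List V) : Prop :=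
  l ≠ [] ∧ l.Nodup ∧ (∀ v ∈ l, v ∈ D.verts) ∧
    l.Chain' (fun u v => (u, v) ∈ D.arcs)

/-- `v` is reachable from `u` by a dipath of `D` (in particular,
every vertex of `D` reaches itself). -/
def Reaches (D : DirGraph V) (u v : V) : Prop :=
  ∃ l : List V, D.IsDipath l ∧ l.head? = some u ∧ l.getLast? = some v

/-- `R_D(u)`: the set of vertices reachable from `u` in `D`. -/
def reachSet (D : DirGraph V) (u : V) : Set V := {v | D.Reaches u v}

/-- `T` is an out-tree with root `r`: `r` is the only vertex of in-degree 0,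
every other vertex has in-degree 1, and the underlying graph is a tree
(equivalently, under the degree conditions, every vertex is reachable from `r`). -/
structure IsOutTree (T : DirGraph V) (r : V) : Prop where
  arcs_mem : ∀ a ∈ T.arcs, a.1 ∈ T.verts ∧ a.2 ∈ T.verts
  root_mem : r ∈ T.verts
  root_indeg : T.inDeg r = 0
  indeg_one : ∀ v ∈ T.verts, v ≠ r → T.inDeg v = 1
  reach_root : ∀ v ∈ T.verts, T.Reaches r v

/-- `T` is an out-tree of the digraph `D`, with root `r`. -/
def IsOutTreeOf (T D : DirGraph V) (r : V) : Prop :=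
  T.IsOutTree r ∧ T.IsSubgraph D

/-- `T` is an out-branching (spanning out-tree) of `D`, with root `r`. -/
def IsOutBranching (T D : DirGraph V) (r : V) : Prop :=
  T.IsOutTreeOf D r ∧ T.verts = D.verts

/-- `Leaf(T)`: the vertices of out-degree 0. -/
def leaves (T : DirGraph V) : Set V := {v ∈ T.verts | T.outDeg v = 0}

/-- `Branch(T)`: the vertices of out-degree at least 2. -/
def branchVerts (T : DirGraph V) : Set V := {v ∈ T.verts | 2 ≤ T.outDeg v}

/-- `BrSucc(T)`: the vertices whose in-neighbor in `T` is a branch vertex. -/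
def brSucc (T : DirGraph V) : Set V := {v | ∃ u, (u, v) ∈ T.arcs ∧ 2 ≤ T.outDeg u}

/-- `Head(B)`: the set of heads of the arcs in `B`. -/
def heads (B : Set (V × V)) : Set V := Prod.snd '' B

/-- `Back_D^T(z) = {(u,v) ∈ A(D) : v ≺_T z ⪯_T u}`. -/
def backArcs (D T : DirGraph V) (z : V) : Set (V × V) :=
  {a ∈ D.arcs | (T.Reaches a.2 z ∧ a.2 ≠ z) ∧ T.Reaches z a.1}

/-- The 1-change for `(u,v)`: add the arc `(u,v)` and delete the arc of `T`
with head `v`. -/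
def oneChange (T : DirGraph V) (u v : V) : DirGraph V :=
  ⟨T.verts, {a ∈ T.arcs | a.2 ≠ v} ∪ {(u, v)}⟩

/-- `ℓ(D)`: the maximum number of leaves over all out-trees of `D`. -/
noncomputable def ell (D : DirGraph V) : ℕ :=
  sSup {k | ∃ (T : DirGraph V) (r : V), IsOutTreeOf T D r ∧ (leaves T).ncard = k}

/-- `ℓ_s(D)`: the maximum number of leaves over all out-branchings of `D`. -/
noncomputable def ellS (D : DirGraph V) : ℕ :=
  sSup {k | ∃ (T : DirGraph V) (r : V), IsOutBranching T D r ∧ (leaves T).ncard = k}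

/-- An arc is useless if no out-branching of `D` contains it. -/
def Useless (D : DirGraph V) (a : V × V) : Prop :=
  ∀ (T : DirGraph V) (r : V), IsOutBranching T D r → a ∉ T.arcs

/-- `T` is a 1-optimal out-branching of `D`: no 1-change for an arc of
`A(D) \ A(T)` results in an out-branching with more leaves. -/
def IsOneOptimal (T D : DirGraph V) (r : V) : Prop :=
  IsOutBranching T D r ∧
    ∀ u v : V, (u, v) ∈ D.arcs → (u, v) ∉ T.arcs → v ≠ r →
      ∀ r' : V, IsOutBranching (oneChange T u v) D r' →
        (leaves (oneChange T u v)).ncard ≤ (leaves T).ncard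

/-- `(X, U)` is a tree decomposition of the digraph `D`: `U` is a tree,
every vertex of `D` is in some bag, both endpoints of every arc are in a
common bag, and for every vertex the set of nodes whose bags contain it
induces a subtree (a connected subgraph) of `U`. -/
structure IsTreeDecomp {ι : Type} (D : DirGraph V) (U : SimpleGraph ι) (X : ι → Set V) :
    Prop where
  tree : U.IsTree
  mem_bag : ∀ v ∈ D.verts, ∃ i, v ∈ X i
  arc_bag : ∀ a ∈ D.arcs, ∃ i, a.1 ∈ X i ∧ a.2 ∈ X i
  bag_connected : ∀ (v : V) (i j : ι), v ∈ X i → v ∈ X j →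
    Relation.ReflTransGen (fun x y => U.Adj x y ∧ v ∈ X x ∧ v ∈ X y) i j

/-- The underlying undirected graph of `T`, on the vertex set of `T`. -/
def underlying (T : DirGraph V) : SimpleGraph {v // v ∈ T.verts} :=
  SimpleGraph.fromRel fun a b => ((a : V), (b : V)) ∈ T.arcs

/-- The bag `X_v = {u, v} ∪ BrSucc(T) ∪ Leaf(T) ∪ Head(Back_D^T(v))`,
where `u` is the in-neighbor of `v` in `T` (omitted when `v` is the root). -/
def bag (D T : DirGraph V) (v : V) : Set V :=
  {u | (u, v) ∈ T.arcs} ∪ {v} ∪ brSucc T ∪ leaves T ∪ heads (backArcs D T v)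

/-- The set of arcs of a dipath given as a list of vertices. -/
def listArcs (l : List V) : Set (V × V) := {a | a ∈ l.zip l.tail}

end DirGraph

/-!
Encode an out-branching by its parent map and take one with the maximum number `k` of leaves, with
root `r`. Reattaching vertices to a new parent does not gain leaves, so all but at most `3 k`
vertices have no sibling and receive arcs only from their parent and from their own descendants. If
`n > 144 k ^ 2`, then some `48 k` consecutive vertices `a 0, a 1, …` of a path towards the root are
of this kind. The degree condition gives each `a i` an in-neighbour other than `a (i - 1)` and
`a (i + 1)`, which lies below `a 0` or is some `a j` with `j + 2 ≤ i`. Hence one can climb from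
`a 0` against the path, and a tenth of the `a i` can be made the leaves of one out-tree rooted at
`a 0`.

It remains to turn an out-tree with leaf set `L` and root `z` into an out-branching with at least
`#L / 3` leaves, assuming that `z` does not reach `r`. Give each vertex `v` the level `d v`, the
least number of vertices of `L` entered on the way from `r` to `v`. All but `d z` of the leaves
survive when `z` is reached from `r` by a best path. On the other hand, at least `2 * d z - #L` of
the levels up to `d z` contain a single vertex `l` of `L`. The path from `z` to `l` has to drop
below the level of `l`, along an arc with head `y`, say, and since this arc is not useless, some
path from `r` avoids `y` and ends on that level or above it. These vertices `y` can be made leaves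
simultaneously.
-/

namespace DirGraph

open Finset Relation

section Reachability

variable {α : Type*} {A : α → α → Prop} {S S' : Set α} {u v w : α}

/-- `ReachAvoiding A S u v`: some walk of `A` from `u` to `v` has all its vertices after `u`
outside `S`. The start `u` itself may lie in `S`. -/
def ReachAvoiding (A : α → α → Prop) (S : Set α) : α → α → Prop :=
  ReflTransGen fun a b => A a b ∧ b ∉ S

lemma ReachAvoiding.mono (hS : S ⊆ S') (h : ReachAvoiding A S' u v) : ReachAvoiding A S u v :=
  ReflTransGen.mono (fun _ _ hab => ⟨hab.1, fun hb => hab.2 (hS hb)⟩) _ _ h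

lemma ReachAvoiding.reflTransGen (h : ReachAvoiding A S u v) : ReflTransGen A u v :=
  ReflTransGen.mono (fun _ _ hab => hab.1) _ _ h

lemma ReachAvoiding.notMem (h : ReachAvoiding A S u v) (hu : u ∉ S) : v ∉ S := by
  cases h with
  | refl => exact hu
  | tail _ hbc => exact hbc.2

lemma reachAvoiding_singleton_of_not_reflTransGen (huv : ReflTransGen A u v)
    (hvr : ReflTransGen A v u) (hw : ¬ ReflTransGen A w u) : ReachAvoiding A {w} u v := by
  induction huv with
  | refl => exact .refl
  | @tail b c _ hbc ih =>
    refine .tail (ih (hvr.head hbc)) ⟨hbc, ?_⟩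
    rintro rfl
    exact hw hvr

end Reachability

section EntryDistance

variable {α : Type*} {A : α → α → Prop} {L : Set α} {r u v : α}

/-- `EntryWalk A L r n v`: some walk of `A` from `r` to `v` enters `L` exactly `n` times; the
start `r` does not count as an entry. -/
inductive EntryWalk (A : α → α → Prop) (L : Set α) (r : α) : ℕ → α → Prop
  | refl : EntryWalk A L r 0 r
  | tail_notMem {n u v} : EntryWalk A L r n u → A u v → v ∉ L → EntryWalk A L r n v
  | tail_mem {n u v} : EntryWalk A L r n u → A u v → v ∈ L → EntryWalk A L r (n + 1) v

/-- The least number of entries into `L` on a walk from `r` to `v`, and `0` if there is no such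
walk. For `L = Set.univ` this is the distance from `r` to `v`. -/
noncomputable def entryDist (A : α → α → Prop) (L : Set α) (r v : α) : ℕ :=
  sInf {n | EntryWalk A L r n v}

/-- The arcs on the walks from `r` with the least number of entries into `L`. -/
def IsTightArc (A : α → α → Prop) (L : Set α) (r a b : α) : Prop :=
  A a b ∧ (b ∉ L ∧ entryDist A L r b = entryDist A L r a ∨
    b ∈ L ∧ entryDist A L r b = entryDist A L r a + 1)

lemma EntryWalk.entryDist_le {n : ℕ} (h : EntryWalk A L r n v) : entryDist A L r v ≤ n :=
  Nat.sInf_le h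

lemma entryWalk_entryDist (h : ReflTransGen A r v) : EntryWalk A L r (entryDist A L r v) v := by
  refine Nat.sInf_mem (s := {n | EntryWalk A L r n v}) ?_
  induction h with
  | refl => exact ⟨0, .refl⟩
  | @tail b c _ hbc ih =>
    obtain ⟨n, hn⟩ := ih
    by_cases hc : c ∈ L
    · exact ⟨n + 1, .tail_mem hn hbc hc⟩
    · exact ⟨n, .tail_notMem hn hbc hc⟩

@[simp]
lemma entryDist_self : entryDist A L r r = 0 :=
  Nat.le_zero.1 EntryWalk.refl.entryDist_le

lemma entryDist_le_of_notMem (hu : ReflTransGen A r u) (huv : A u v) (hv : v ∉ L) :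
    entryDist A L r v ≤ entryDist A L r u :=
  ((entryWalk_entryDist hu).tail_notMem huv hv).entryDist_le

lemma entryDist_le_add_one (hu : ReflTransGen A r u) (huv : A u v) :
    entryDist A L r v ≤ entryDist A L r u + 1 := by
  by_cases hv : v ∈ L
  · exact ((entryWalk_entryDist hu).tail_mem huv hv).entryDist_le
  · exact (entryDist_le_of_notMem hu huv hv).trans (Nat.le_succ _)

lemma EntryWalk.reflTransGen {n : ℕ} (h : EntryWalk A L r n v) : ReflTransGen A r v := by
  induction h with
  | refl => exact .refl
  | tail_notMem _ huv _ ih | tail_mem _ huv _ ih => exact ih.tail huv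

lemma reflTransGen_isTightArc (h : ReflTransGen A r v) : ReflTransGen (IsTightArc A L r) r v := by
  suffices ∀ {n v}, EntryWalk A L r n v → n = entryDist A L r v →
      ReflTransGen (IsTightArc A L r) r v from this (entryWalk_entryDist h) rfl
  intro n v h
  induction h with
  | refl => exact fun _ => .refl
  | tail_notMem hu huv hv ih =>
    intro hn
    have hle := hu.entryDist_le
    have hstep := entryDist_le_of_notMem hu.reflTransGen huv hv
    exact (ih (by lia)).tail ⟨huv, .inl ⟨hv, by lia⟩⟩
  | tail_mem hu huv hv ih =>
    intro hn
    have hle := hu.entryDist_le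
    have hstep := entryDist_le_add_one (L := L) hu.reflTransGen huv
    exact (ih (by lia)).tail ⟨huv, .inr ⟨hv, by lia⟩⟩

lemma reflTransGen_of_isTightArc (h : ReflTransGen (IsTightArc A L r) r v) :
    ReflTransGen A r v :=
  ReflTransGen.mono (fun _ _ hab => hab.1) _ _ h

lemma exists_arc_entryDist_of_mem (h : ReflTransGen A r v) (hvr : v ≠ r) (hv : v ∈ L) :
    ∃ u, A u v ∧ ReflTransGen A r u ∧ entryDist A L r v = entryDist A L r u + 1 := by
  obtain rfl | ⟨u, hu, huv, ⟨hvL, _⟩ | ⟨_, hd⟩⟩ := (reflTransGen_isTightArc (L := L) h).cases_tail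
  · exact absurd rfl hvr
  · exact absurd hv hvL
  · exact ⟨u, huv, reflTransGen_of_isTightArc hu, hd⟩

lemma exists_mem_entryDist_eq (h : ReflTransGen A r v) {i : ℕ} (hi : 1 ≤ i)
    (hiv : i ≤ entryDist A L r v) : ∃ l ∈ L, entryDist A L r l = i := by
  induction reflTransGen_isTightArc (L := L) h with
  | refl => rw [entryDist_self] at hiv; lia
  | @tail b c hb hbc ih =>
    have hb' : ReflTransGen A r b := reflTransGen_of_isTightArc hb
    rcases hbc.2 with ⟨_, hd⟩ | ⟨hc, hd⟩
    · exact ih hb' (by lia)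
    · rcases Nat.lt_or_ge (entryDist A L r b) i with hlt | hge
      · exact ⟨c, hc, by lia⟩
      · exact ih hb' hge

lemma exists_reachAvoiding_sdiff_card_le {L : Finset α} [DecidableEq α] (h : ReflTransGen A r v) :
    ∃ Q ⊆ L, #Q ≤ entryDist A L r v ∧ ReachAvoiding A (L \ Q : Finset α) r v := by
  induction reflTransGen_isTightArc (L := (L : Set α)) h with
  | refl => exact ⟨∅, by simp, by simp, .refl⟩
  | @tail b c hb hbc ih =>
    obtain ⟨Q, hQL, hQ, hrb⟩ := ih (reflTransGen_of_isTightArc hb)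
    obtain ⟨hbc, ⟨hc, hd⟩ | ⟨hc, hd⟩⟩ := hbc
    · exact ⟨Q, hQL, by lia, .tail hrb ⟨hbc, fun h => hc (mem_sdiff.1 h).1⟩⟩
    · refine ⟨insert c Q, insert_subset hc hQL, (card_insert_le c Q).trans (by lia), ?_⟩
      refine .tail (hrb.mono ?_) ⟨hbc, by simp⟩
      exact coe_subset.2 (sdiff_subset_sdiff subset_rfl (subset_insert c Q))

end EntryDistance

section ParentMap

variable {α : Type*} {A : α → α → Prop} {r v : α} {f : α → α}

/-- `f` is the parent map of an out-branching of `A` rooted at `r`; the root is its own parent. -/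
structure IsParentMap (A : α → α → Prop) (r : α) (f : α → α) : Prop where
  root : f r = r
  arc : ∀ v ≠ r, A (f v) v
  reach : ∀ v, ∃ n, f^[n] v = r

/-- `v` lies on the path that the parent map `f` traces from `u` towards the root; `u` counts as
its own ancestor. -/
def IsAncestor (f : α → α) (v u : α) : Prop := ∃ n, f^[n] u = v

open Classical in
/-- The leaves of the out-branching with root `r` and parent map `f`. -/
noncomputable def leafFinset [Fintype α] (r : α) (f : α → α) : Finset α := {v | ∀ w ≠ r, f w ≠ v}

@[simp]
lemma mem_leafFinset [Fintype α] : v ∈ leafFinset r f ↔ ∀ w ≠ r, f w ≠ v := by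
  simp [leafFinset]

namespace IsParentMap

lemma eq_root_of_iterate_eq (hf : IsParentMap A r f) {n : ℕ} (h : f^[n + 1] v = v) : v = r := by
  obtain ⟨m, hm⟩ := hf.reach v
  calc v = f^[(n + 1) * m] v := by rw [Function.iterate_mul, Function.iterate_fixed h]
    _ = f^[n * m] (f^[m] v) := by rw [← Function.iterate_add_apply]; ring_nf
    _ = r := by rw [hm, Function.iterate_fixed hf.root]

lemma reachAvoiding_iterate (hf : IsParentMap A r f) {S : Set α} {n : ℕ}
    (h : ∀ i < n, f^[i] v ∉ S) : ReachAvoiding A S (f^[n] v) v := by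
  induction n generalizing v with
  | zero => exact .refl
  | succ n ih =>
    have hn : ReachAvoiding A S (f^[n + 1] v) (f v) := ih fun i hi => h (i + 1) (by lia)
    by_cases hv : v = r
    · rwa [hv, hf.root, ← hv] at hn
    · exact hn.tail ⟨hf.arc v hv, h 0 n.succ_pos⟩

lemma reflTransGen (hf : IsParentMap A r f) (v : α) : ReflTransGen A r v := by
  obtain ⟨n, hn⟩ := hf.reach v
  exact hn ▸ (hf.reachAvoiding_iterate (S := ∅) fun _ _ => Set.notMem_empty _).reflTransGen

lemma exists_depth (hf : IsParentMap A r f) : ∃ d : α → ℕ, ∀ v ≠ r, d (f v) < d v := by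
  classical
  refine ⟨fun v => Nat.find (hf.reach v), fun v hv => ?_⟩
  have hpos : Nat.find (hf.reach v) ≠ 0 := fun h => hv ((Nat.find_eq_zero _).1 h)
  obtain ⟨n, hn⟩ := Nat.exists_eq_succ_of_ne_zero hpos
  have hspec := Nat.find_spec (hf.reach v)
  rw [hn, Function.iterate_succ_apply] at hspec
  exact (Nat.find_min' (hf.reach (f v)) hspec).trans_lt (by lia)

lemma injOn_iterate (hf : IsParentMap A r f) {b : α} {N : ℕ} (hb : ∀ i ≤ N, f^[i] b ≠ r) :
    Set.InjOn (fun i => f^[i] b) (Set.Iic N) := by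
  have ne_of_lt {i j} (hij : i < j) (hj : j ≤ N) : f^[i] b ≠ f^[j] b := by
    intro h
    refine hb i (hij.le.trans hj) (hf.eq_root_of_iterate_eq (n := j - i - 1) ?_)
    rw [← Function.iterate_add_apply, h]
    congr 1
    lia
  intro i hi j hj h
  by_contra hne
  rcases lt_or_gt_of_ne hne with hlt | hlt
  · exact ne_of_lt hlt hj h
  · exact ne_of_lt hlt hi h.symm

lemma exists_leaf_isAncestor [Fintype α] (hf : IsParentMap A r f) (v : α) :
    ∃ l ∈ leafFinset r f, IsAncestor f v l := by
  classical
  obtain ⟨d, hd⟩ := hf.exists_depth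
  obtain ⟨l, hl, hmax⟩ := exists_max_image {l | IsAncestor f v l} d
    ⟨v, mem_filter.2 ⟨mem_univ v, 0, rfl⟩⟩
  simp only [mem_filter, mem_univ, true_and] at hl hmax
  refine ⟨l, mem_leafFinset.2 ?_, hl⟩
  rintro w hw rfl
  obtain ⟨n, hn⟩ := hl
  exact (hd w hw).not_ge (hmax w ⟨n + 1, hn⟩)

end IsParentMap

lemma IsAncestor.total {u w : α} (hu : IsAncestor f u v) (hw : IsAncestor f w v) :
    IsAncestor f u w ∨ IsAncestor f w u := by
  obtain ⟨n, rfl⟩ := hu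
  obtain ⟨m, rfl⟩ := hw
  rcases le_total n m with h | h
  · exact .inr ⟨m - n, by rw [← Function.iterate_add_apply, Nat.sub_add_cancel h]⟩
  · exact .inl ⟨n - m, by rw [← Function.iterate_add_apply, Nat.sub_add_cancel h]⟩

lemma IsParentMap.card_le_card_leafFinset [Fintype α] (hf : IsParentMap A r f) {Y : Finset α}
    (hY : IsAntichain (IsAncestor f) (Y : Set α)) : #Y ≤ #(leafFinset r f) := by
  choose leaf hleaf hanc using hf.exists_leaf_isAncestor
  refine card_le_card_of_injOn leaf (fun y _ => hleaf y) fun y hy y' hy' h => ?_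
  rcases (h ▸ hanc y).total (hanc y') with h | h
  · exact hY.eq hy hy' h
  · exact (hY.eq hy' hy h).symm

lemma IsParentMap.reroute [DecidableEq α] (hf : IsParentMap A r f) {u : α} {H : Finset α}
    (hA : ∀ v ∈ H, A u v) (hH : ∀ v ∈ H, ¬ IsAncestor f v u) :
    IsParentMap A r (H.piecewise (fun _ => u) f) := by
  have hrH : r ∉ H := fun h => hH r h (hf.reach u)
  have iterate_eq (n : ℕ) : (H.piecewise (fun _ => u) f)^[n] u = f^[n] u := by
    induction n with
    | zero => rfl
    | succ n ih =>
      rw [Function.iterate_succ_apply', Function.iterate_succ_apply', ih,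
        piecewise_eq_of_notMem _ _ _ fun h => hH _ h ⟨n, rfl⟩]
  refine ⟨by rw [piecewise_eq_of_notMem _ _ _ hrH, hf.root], fun v hv => ?_, fun v => ?_⟩
  · by_cases h : v ∈ H
    · simpa [h] using hA v h
    · simpa [h] using hf.arc v hv
  · obtain ⟨n, hn⟩ := hf.reach v
    induction n generalizing v with
    | zero => exact ⟨0, hn⟩
    | succ n ih =>
      by_cases h : v ∈ H
      · obtain ⟨m, hm⟩ := hf.reach u
        exact ⟨m + 1, by rw [Function.iterate_succ_apply, piecewise_eq_of_mem _ _ _ h,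
          iterate_eq, hm]⟩
      · obtain ⟨m, hm⟩ := ih (f v) hn
        exact ⟨m + 1, by rw [Function.iterate_succ_apply, piecewise_eq_of_notMem _ _ _ h, hm]⟩

/-- The parents are chosen by breadth-first search, first along the walks of `B` and then along
the walks of `A`. -/
lemma exists_isParentMap_of_le {B : α → α → Prop} (hBA : B ≤ A)
    (hr : ∀ v, ReflTransGen A r v) :
    ∃ f, IsParentMap A r f ∧
      ∀ v ≠ r, ReflTransGen B r v → B (f v) v ∧ ReflTransGen B r (f v) := by
  classical
  have exists_parent (v : α) : ∃ u, (v = r → u = r) ∧ (v ≠ r → A u v ∧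
      (ReflTransGen B r v → B u v ∧ ReflTransGen B r u ∧
        entryDist B .univ r u < entryDist B .univ r v) ∧
      (¬ ReflTransGen B r v → entryDist A .univ r u < entryDist A .univ r v)) := by
    by_cases hv : v = r
    · exact ⟨r, by simp [hv]⟩
    by_cases hvB : ReflTransGen B r v
    · obtain ⟨u, huv, hu, hd⟩ := exists_arc_entryDist_of_mem hvB hv (Set.mem_univ v)
      exact ⟨u, by simp [hv], fun _ => ⟨hBA _ _ huv, fun _ => ⟨huv, hu, by lia⟩, absurd hvB⟩⟩
    · obtain ⟨u, huv, -, hd⟩ := exists_arc_entryDist_of_mem (hr v) hv (Set.mem_univ v)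
      exact ⟨u, by simp [hv], fun _ => ⟨huv, (absurd · hvB), fun _ => by lia⟩⟩
  choose f hroot hf using exists_parent
  have iterate_succ {v} (h : ∃ n, f^[n] (f v) = r) : ∃ n, f^[n] v = r :=
    h.imp' Nat.succ fun _ => id
  have reach_of_reach (v : α) (hv : ReflTransGen B r v) : ∃ n, f^[n] v = r := by
    induction hd : entryDist B .univ r v using Nat.strong_induction_on generalizing v with
    | _ d ih =>
    by_cases hvr : v = r
    · exact ⟨0, hvr⟩
    obtain ⟨-, hu, hlt⟩ := (hf v hvr).2.1 hv
    exact iterate_succ (ih _ (hd ▸ hlt) _ hu rfl)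
  have reach (v : α) : ∃ n, f^[n] v = r := by
    induction hd : entryDist A .univ r v using Nat.strong_induction_on generalizing v with
    | _ d ih =>
    by_cases hv : ReflTransGen B r v
    · exact reach_of_reach v hv
    have hvr : v ≠ r := fun h => hv (h ▸ .refl)
    exact iterate_succ (ih _ (hd ▸ (hf v hvr).2.2 hv) _ rfl)
  exact ⟨f, ⟨hroot r rfl, fun v hv => (hf v hv).1, reach⟩,
    fun v hv hvB => ((hf v hv).2.1 hvB).imp_right And.left⟩

lemma exists_isParentMap_isAntichain (hr : ∀ v, ReflTransGen A r v) {S : Set α} (hrS : r ∉ S)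
    (hS : ∀ s ∈ S, ∃ x, A x s ∧ ReachAvoiding A S r x) :
    ∃ f, IsParentMap A r f ∧ IsAntichain (IsAncestor f) S := by
  set B : α → α → Prop := fun u v => A u v ∧ u ∉ S
  have reach_of_avoiding {x} (hx : ReachAvoiding A S r x) : ReflTransGen B r x := by
    induction hx with
    | refl => exact .refl
    | tail hx hxy ih => exact ih.tail ⟨hxy.1, ReachAvoiding.notMem hx hrS⟩
  have reach_mem {s} (hs : s ∈ S) : ReflTransGen B r s := by
    obtain ⟨x, hxs, hx⟩ := hS s hs
    exact (reach_of_avoiding hx).tail ⟨hxs, hx.notMem hrS⟩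
  obtain ⟨f, hf, hfB⟩ := exists_isParentMap_of_le (B := B) (fun _ _ h => h.1) hr
  have iterate_notMem (n : ℕ) (v : α) (hv : ReflTransGen B r v) : f^[n + 1] v ∉ S := by
    by_cases hvr : v = r
    · rwa [hvr, Function.iterate_fixed hf.root]
    · induction n generalizing v with
      | zero => exact (hfB v hvr hv).1.2
      | succ n ih =>
        by_cases hfv : f v = r
        · rwa [Function.iterate_succ_apply, hfv, Function.iterate_fixed hf.root]
        · exact ih (f v) (hfB v hvr hv).2 hfv
  refine ⟨f, hf, ?_⟩
  rintro s hs t ht hst ⟨n | n, hn⟩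
  · exact hst hn.symm
  · exact iterate_notMem n t (reach_mem ht) (hn ▸ hs)

end ParentMap

section UniqueLevel

variable {α : Type*} {L : Finset α} {d : α → ℕ} {m : ℕ}

open Classical in
/-- The elements of `L` of level at most `m` that are alone in `L` on their level, where `d` gives
the level. -/
noncomputable def uniqueLevel (L : Finset α) (d : α → ℕ) (m : ℕ) : Finset α :=
  {l ∈ L | d l ≤ m ∧ ∀ l' ∈ L, d l' = d l → l' = l}

lemma mem_uniqueLevel {l : α} :
    l ∈ uniqueLevel L d m ↔ l ∈ L ∧ d l ≤ m ∧ ∀ l' ∈ L, d l' = d l → l' = l := by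
  simp [uniqueLevel]

lemma two_mul_le_card_add_card_uniqueLevel (h : ∀ i ∈ Icc 1 m, ∃ l ∈ L, d l = i) :
    2 * m ≤ #L + #(uniqueLevel L d m) := by
  have two_le (i : ℕ) (hi : i ∈ Icc 1 m) : 2 ≤ #{l ∈ L | d l = i} +
      #{l ∈ uniqueLevel L d m | d l = i} := by
    obtain ⟨l, hl, rfl⟩ := h i hi
    have hl' : l ∈ ({l' ∈ L | d l' = d l} : Finset α) := mem_filter.2 ⟨hl, rfl⟩
    by_cases hu : ∀ l' ∈ L, d l' = d l → l' = l
    · have hlu : l ∈ uniqueLevel L d m := mem_uniqueLevel.2 ⟨hl, (mem_Icc.1 hi).2, hu⟩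
      have hlu' : l ∈ ({l' ∈ uniqueLevel L d m | d l' = d l} : Finset α) := mem_filter.2 ⟨hlu, rfl⟩
      exact Nat.add_le_add (card_pos.2 ⟨l, hl'⟩) (card_pos.2 ⟨l, hlu'⟩)
    · push Not at hu
      obtain ⟨l', hl'L, hd, hne⟩ := hu
      have := one_lt_card.2 ⟨l', mem_filter.2 ⟨hl'L, hd⟩, l, hl', hne⟩
      lia
  calc 2 * m = ∑ _i ∈ Icc 1 m, 2 := by simp [mul_comm]
    _ ≤ ∑ i ∈ Icc 1 m, (#{l ∈ L | d l = i} + #{l ∈ uniqueLevel L d m | d l = i}) :=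
        sum_le_sum two_le
    _ ≤ #L + #(uniqueLevel L d m) := by
        rw [sum_add_distrib, sum_card_fiberwise_eq_card_filter, sum_card_fiberwise_eq_card_filter]
        exact Nat.add_le_add (card_filter_le _ _) (card_filter_le _ _)

end UniqueLevel

section DetourSet

variable {α : Type*} {A : α → α → Prop} {L Y : Set α} {r v y : α}

/-- `Y` has at most one vertex on each level of `entryDist A L r`, the vertices of `L` directly
above a level met by `Y` are unique, and each `y ∈ Y` can be bypassed on the way from `r` to some
vertex of a level above that of `y`. -/
structure IsDetourSet (A : α → α → Prop) (L : Set α) (r : α) (Y : Set α) : Prop where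
  root_notMem : r ∉ Y
  disjoint : Disjoint Y L
  injOn : Set.InjOn (entryDist A L r) Y
  unique_above : ∀ y ∈ Y, ∀ l ∈ L, ∀ l' ∈ L, entryDist A L r l = entryDist A L r y + 1 →
    entryDist A L r l' = entryDist A L r y + 1 → l = l'
  exists_detour : ∀ y ∈ Y, ∃ y', entryDist A L r y < entryDist A L r y' ∧
    ReachAvoiding A {y} r y'

lemma reachAvoiding_or_exists_mem_level (h : ReflTransGen A r v)
    (hL : ∀ l ∈ L, entryDist A L r l = entryDist A L r v → ReachAvoiding A Y r l) :
    ReachAvoiding A Y r v ∨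
      ∃ w ∈ Y, entryDist A L r w = entryDist A L r v ∧ ∃ x, A x w ∧ ReachAvoiding A Y r x := by
  induction reflTransGen_isTightArc (L := L) h with
  | refl => exact .inl .refl
  | @tail b c hb hbc ih =>
    obtain ⟨hbc, ⟨-, hd⟩ | ⟨hc, -⟩⟩ := hbc
    · rw [hd] at hL ⊢
      refine (ih (reflTransGen_of_isTightArc hb) hL).elim (fun hb' => ?_) .inr
      by_cases hcY : c ∈ Y
      · exact .inr ⟨c, hcY, hd, b, hbc, hb'⟩
      · exact .inl (.tail hb' ⟨hbc, hcY⟩)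
    · exact .inl (hL c hc rfl)

namespace IsDetourSet

/-- The detour around `y` leaves the levels up to that of `y` by entering `L` on the next level,
hence at `v`. -/
lemma reachAvoiding_above (hY : IsDetourSet A L r Y) (hr : ∀ v, ReflTransGen A r v) (hy : y ∈ Y)
    (hL : ∀ l ∈ L, entryDist A L r l = entryDist A L r y → ReachAvoiding A Y r l) (hv : v ∈ L)
    (hvy : entryDist A L r v = entryDist A L r y + 1) : ReachAvoiding A Y r v := by
  have hvY : v ∉ Y := hY.disjoint.notMem_of_mem_right hv
  have bypass {w} (hw : ReachAvoiding A {y} r w) : ReachAvoiding A Y r v ∨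
      entryDist A L r w ≤ entryDist A L r y ∧
        (entryDist A L r w = entryDist A L r y → ReachAvoiding A Y r w) := by
    induction hw with
    | refl => exact .inr ⟨by simp, fun _ => .refl⟩
    | @tail b c _ hbc ih =>
      refine ih.elim .inl fun ⟨hle, hreach⟩ => ?_
      have hstep := entryDist_le_add_one (L := L) (hr b) hbc.1
      by_cases hcL : c ∈ L
      · rcases hstep.lt_or_eq with hlt | heq
        · exact .inr ⟨by lia, hL c hcL⟩
        rcases hle.lt_or_eq with hlt | hby
        · exact .inr ⟨by lia, hL c hcL⟩
        obtain rfl := hY.unique_above y hy c hcL v hv (by lia) hvy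
        exact .inl (.tail (hreach hby) ⟨hbc.1, hvY⟩)
      · have hcb := entryDist_le_of_notMem (hr b) hbc.1 hcL
        refine .inr ⟨hcb.trans hle, fun hcy => .tail (hreach (by lia)) ⟨hbc.1, fun hcY => ?_⟩⟩
        exact hbc.2 (hY.injOn hcY hy hcy)
  obtain ⟨y', hlt, hy'⟩ := hY.exists_detour y hy
  exact (bypass hy').resolve_right fun h => hlt.not_ge h.1

lemma reachAvoiding_of_mem (hY : IsDetourSet A L r Y) (hr : ∀ v, ReflTransGen A r v) (hv : v ∈ L) :
    ReachAvoiding A Y r v := by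
  induction hj : entryDist A L r v using Nat.strong_induction_on generalizing v with
  | _ j ih =>
  by_cases hvr : v = r
  · exact hvr ▸ .refl
  obtain ⟨u, huv, -, hd⟩ := exists_arc_entryDist_of_mem (hr v) hvr hv
  have hL (l : α) (hl : l ∈ L) (hlu : entryDist A L r l = entryDist A L r u) :
      ReachAvoiding A Y r l := ih _ (by lia) hl rfl
  rcases reachAvoiding_or_exists_mem_level (hr u) hL with hu | ⟨y, hy, hyu, -⟩
  · exact .tail hu ⟨huv, hY.disjoint.notMem_of_mem_right hv⟩
  · exact hY.reachAvoiding_above hr hy (hyu ▸ hL) hv (hyu ▸ hd)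

lemma exists_arc_reachAvoiding (hY : IsDetourSet A L r Y) (hr : ∀ v, ReflTransGen A r v)
    (hy : y ∈ Y) : ∃ x, A x y ∧ ReachAvoiding A Y r x := by
  rcases reachAvoiding_or_exists_mem_level (hr y) fun l hl _ => hY.reachAvoiding_of_mem hr hl
    with h | ⟨w, hw, hwy, h⟩
  · exact absurd hy (h.notMem hY.root_notMem)
  · exact hY.injOn hw hy hwy ▸ h

end IsDetourSet

end DetourSet

section OutTreeToOutBranching

variable {α : Type*} {A : α → α → Prop} {r v z : α}

lemma entryDist_lt_of_reachAvoiding {L : Set α} {l : α} (hr : ∀ v, ReflTransGen A r v)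
    (hrL : r ∉ L) (hl : l ∈ L) (hunique : ∀ l' ∈ L, entryDist A L r l' = entryDist A L r l → l' = l)
    (h : ReachAvoiding A {l} r v) : entryDist A L r v < entryDist A L r l := by
  induction h with
  | refl =>
    obtain ⟨u, -, -, hd⟩ := exists_arc_entryDist_of_mem (hr l) (ne_of_mem_of_not_mem hl hrL) hl
    simp [hd]
  | @tail b c _ hbc ih =>
    have hstep := entryDist_le_add_one (L := L) (hr b) hbc.1
    by_cases hc : c ∈ L
    · exact lt_of_le_of_ne (by lia) fun hcl => hbc.2 (hunique c hc hcl)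
    · exact (entryDist_le_of_notMem (hr b) hbc.1 hc).trans_lt ih

lemma exists_crossing {L : Set α} {x : α} {c : ℕ} (hr : ∀ v, ReflTransGen A r v)
    (h : ReachAvoiding A L z x) (hz : c ≤ entryDist A L r z) (hx : entryDist A L r x < c) :
    ∃ y' y, A y' y ∧ y ∉ L ∧ ReflTransGen A z y ∧ c ≤ entryDist A L r y' ∧
      entryDist A L r y < c ∧ entryDist A L r x ≤ entryDist A L r y := by
  induction h with
  | refl => lia
  | @tail b x hb hbx ih =>
    by_cases hbc : c ≤ entryDist A L r b
    · exact ⟨b, x, hbx.1, hbx.2, (ReachAvoiding.reflTransGen hb).tail hbx.1, hbc, hx, le_rfl⟩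
    · obtain ⟨y', y, hA, hyL, hzy, hy', hy, hby⟩ := ih (not_le.1 hbc)
      have hxb := entryDist_le_of_notMem (hr b) hbx.1 hbx.2
      exact ⟨y', y, hA, hyL, hzy, hy', hy, hxb.trans hby⟩

/-- The vertex `y` is where the walk from `z` to `l` drops below the level of `l`. -/
lemma exists_detour_of_mem_uniqueLevel {L : Finset α} {l : α} (hr : ∀ v, ReflTransGen A r v)
    (havoid : ∀ u v, A u v → ¬ ReflTransGen A v r → ReachAvoiding A {v} r u)
    (hzr : ¬ ReflTransGen A z r) (hL : ∀ l ∈ L, ∃ x, A x l ∧ ReachAvoiding A L z x)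
    (hl : l ∈ uniqueLevel L (entryDist A L r) (entryDist A L r z)) :
    ∃ y', ∃ y ∉ L, ReflTransGen A z y ∧ ReachAvoiding A {y} r y' ∧
      entryDist A L r l ≤ entryDist A L r y' ∧ entryDist A L r y + 1 = entryDist A L r l := by
  have not_reach {v} (hv : ReflTransGen A z v) : ¬ ReflTransGen A v r := fun h => hzr (hv.trans h)
  have reach_mem {l} (hl : l ∈ L) : ReflTransGen A z l := by
    obtain ⟨x, hxl, hx⟩ := hL l hl
    exact hx.reflTransGen.tail hxl
  have hrL : r ∉ L := fun h => not_reach (reach_mem h) .refl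
  obtain ⟨hlL, hlz, hunique⟩ := mem_uniqueLevel.1 hl
  obtain ⟨x, hxl, hx⟩ := hL l hlL
  have hxlt := entryDist_lt_of_reachAvoiding hr hrL hlL hunique
    (havoid x l hxl (not_reach (reach_mem hlL)))
  obtain ⟨y', y, hA, hyL, hzy, hy', hlt, hle⟩ := exists_crossing hr hx hlz hxlt
  have hstep := entryDist_le_add_one (L := L) (hr x) hxl
  exact ⟨y', y, hyL, hzy, havoid y' y hA (not_reach hzy), hy', by lia⟩

lemma exists_isDetourSet {L : Finset α} (hr : ∀ v, ReflTransGen A r v)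
    (havoid : ∀ u v, A u v → ¬ ReflTransGen A v r → ReachAvoiding A {v} r u)
    (hzr : ¬ ReflTransGen A z r) (hL : ∀ l ∈ L, ∃ x, A x l ∧ ReachAvoiding A L z x) :
    ∃ Y : Finset α, IsDetourSet A L r Y ∧
      #Y = #(uniqueLevel L (entryDist A L r) (entryDist A L r z)) := by
  classical
  set d := entryDist A (L : Set α) r
  have exists_detour (l : α) (hl : l ∈ uniqueLevel L d (d z)) :=
    exists_detour_of_mem_uniqueLevel hr havoid hzr hL hl
  choose! y' y hyL hzy havoid_y hy' hd using exists_detour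
  have unique {l l'} (hl : l ∈ uniqueLevel L d (d z)) (hl' : l' ∈ L) (h : d l' = d l) : l' = l :=
    (mem_uniqueLevel.1 hl).2.2 l' hl' h
  have eq_of_level {l l'} (hl : l ∈ uniqueLevel L d (d z)) (hl' : l' ∈ uniqueLevel L d (d z))
      (h : d (y l) = d (y l')) : l = l' :=
    unique hl' (mem_uniqueLevel.1 hl).1 (by have := hd l hl; have := hd l' hl'; lia)
  refine ⟨(uniqueLevel L d (d z)).image y, ?_,
    card_image_of_injOn fun l hl l' hl' h => eq_of_level hl hl' (congrArg d h)⟩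
  rw [coe_image]
  refine ⟨?_, Set.disjoint_left.2 ?_, ?_, ?_, ?_⟩
  · rintro ⟨l, hl, rfl⟩
    exact hzr (hzy l hl)
  · rintro _ ⟨l, hl, rfl⟩
    exact hyL l hl
  · rintro _ ⟨l, hl, rfl⟩ _ ⟨l', hl', rfl⟩ h
    exact congrArg y (eq_of_level hl hl' h)
  · rintro _ ⟨l, hl, rfl⟩ a ha b hb hal hbl
    exact (unique hl ha (hal.trans (hd l hl))).trans (unique hl hb (hbl.trans (hd l hl))).symm
  · rintro _ ⟨l, hl, rfl⟩
    exact ⟨y' l, (hd l hl).trans_le (hy' l hl), havoid_y l hl⟩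

lemma exists_isParentMap_card_le_three_mul [Fintype α] {L : Finset α} (hr : ∀ v, ReflTransGen A r v)
    (havoid : ∀ u v, A u v → ¬ ReflTransGen A v r → ReachAvoiding A {v} r u)
    (hzL : z ∉ L) (hL : ∀ l ∈ L, ∃ x, A x l ∧ ReachAvoiding A L z x) :
    ∃ r' f, IsParentMap A r' f ∧ #L ≤ 3 * #(leafFinset r' f) := by
  classical
  by_cases hzr : ReflTransGen A z r
  · obtain ⟨f, hf, hanti⟩ := exists_isParentMap_isAntichain (fun v => hzr.trans (hr v)) hzL hL
    exact ⟨z, f, hf, by linarith [hf.card_le_card_leafFinset hanti]⟩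
  have hrL : r ∉ L := fun h => by
    obtain ⟨x, hxr, hx⟩ := hL r h
    exact hzr (hx.reflTransGen.tail hxr)
  obtain ⟨Q, hQL, hQ, hrz⟩ := exists_reachAvoiding_sdiff_card_le (L := L) (hr z)
  obtain ⟨f, hf, hanti⟩ := exists_isParentMap_isAntichain (S := (L \ Q : Finset α)) hr
    (fun h => hrL (mem_sdiff.1 h).1) fun s hs => by
      obtain ⟨x, hxs, hx⟩ := hL s (mem_sdiff.1 hs).1
      exact ⟨x, hxs, hrz.trans (hx.mono (coe_subset.2 sdiff_subset))⟩
  obtain ⟨Y, hY, hYcard⟩ := exists_isDetourSet hr havoid hzr hL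
  obtain ⟨g, hg, hganti⟩ := exists_isParentMap_isAntichain hr hY.root_notMem
    fun y hy => hY.exists_arc_reachAvoiding hr hy
  have hLQ : #L - #Q ≤ #(leafFinset r f) :=
    card_sdiff_of_subset hQL ▸ hf.card_le_card_leafFinset hanti
  have hYg : #Y ≤ #(leafFinset r g) := hg.card_le_card_leafFinset hganti
  have hcount := two_mul_le_card_add_card_uniqueLevel fun i hi =>
    exists_mem_entryDist_eq (L := (L : Set α)) (hr z) (mem_Icc.1 hi).1 (mem_Icc.1 hi).2
  rcases le_or_gt (3 * entryDist A L r z) (2 * #L) with h | h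
  · exact ⟨r, f, hf, by lia⟩
  · exact ⟨r, g, hg, by lia⟩

end OutTreeToOutBranching

section SparseIndices

lemma exists_independent_card_le {ι : Type*} {c : ι → ι → Prop} {s : Finset ι}
    {N : ι → Finset ι} {k : ℕ} (hirrefl : ∀ i ∈ s, ¬ c i i)
    (hN : ∀ i ∈ s, ∀ j ∈ s, c i j ∨ c j i → j ∈ N i) (hk : ∀ i ∈ s, #(N i) ≤ k) :
    ∃ t ⊆ s, (∀ i ∈ t, ∀ j ∈ t, ¬ c i j) ∧ #s ≤ #t * (k + 1) := by
  classical
  obtain ⟨t, ht, hmax⟩ := exists_max_image {t ∈ s.powerset | ∀ i ∈ t, ∀ j ∈ t, ¬ c i j} card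
    ⟨∅, by simp⟩
  simp only [mem_filter, mem_powerset] at ht hmax
  obtain ⟨hts, hindep⟩ := ht
  refine ⟨t, hts, hindep, ?_⟩
  have hcover : s ⊆ t.biUnion fun i => insert i (N i) := by
    intro x hx
    by_contra hxt
    simp only [mem_biUnion, mem_insert, not_exists, not_and, not_or] at hxt
    have hxt' : x ∉ t := fun h => (hxt x h).1 rfl
    have hfree (i : ι) (hi : i ∈ t) : ¬ (c i x ∨ c x i) :=
      fun h => (hxt i hi).2 (hN i (hts hi) x hx h)
    have hle := hmax (insert x t) ⟨insert_subset hx hts, by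
      simp only [forall_mem_insert]
      exact ⟨⟨hirrefl x hx, fun j hj h => hfree j hj (.inr h)⟩,
        fun i hi => ⟨fun h => hfree i hi (.inl h), hindep i hi⟩⟩⟩
    rw [card_insert_of_notMem hxt'] at hle
    exact (Nat.lt_succ_self _).not_ge hle
  exact (card_le_card hcover).trans <| card_biUnion_le_card_mul _ _ _ fun i hi =>
    (card_insert_le _ _).trans (Nat.succ_le_succ (hk i (hts hi)))

lemma card_le_two_mul_card_filter_fiber_le_one {ι : Type*} [DecidableEq ι] (q : ι → ι)
    (s : Finset ι) : #s ≤ 2 * #{i ∈ s | #{j ∈ s | q j = i} ≤ 1} := by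
  have hbad := calc
    #{i ∈ s | ¬ #{j ∈ s | q j = i} ≤ 1} * 2
        ≤ ∑ i ∈ s with ¬ #{j ∈ s | q j = i} ≤ 1, #{j ∈ s | q j = i} :=
      smul_eq_mul _ 2 ▸ card_nsmul_le_sum _ _ _ fun i hi => not_le.1 (mem_filter.1 hi).2
    _ ≤ #s := by
      rw [sum_card_fiberwise_eq_card_filter]
      exact card_filter_le _ _
  have hsplit := card_filter_add_card_filter_not (s := s) fun i => #{j ∈ s | q j = i} ≤ 1
  lia

/-- An independent set for the relation `c i j` stating that `i = q i'` for some `i'` such that `j`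
is `i' + 1` or `q (i' + 1)`. An index with at most one preimage under `q` has at most four
neighbours for this relation. -/
lemma exists_sparse_indices (N : ℕ) (q : ℕ → ℕ) (hq : ∀ i ∈ Icc 1 N, q i ≠ i + 1) :
    ∃ L ⊆ Icc 1 N, N ≤ 10 * #L + 2 ∧
      ∀ i ∈ Icc 1 N, q i ∈ L → i + 1 ≤ N ∧ i + 1 ∉ L ∧ q (i + 1) ∉ L := by
  set s : Finset ℕ := {i ∈ Icc 1 N | #{j ∈ Icc 1 N | q j = i} ≤ 1}.erase (q N)
  have hs : N ≤ 2 * (#s + 1) := by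
    have hgood := card_le_two_mul_card_filter_fiber_le_one q (Icc 1 N)
    have herase := pred_card_le_card_erase (s := {i ∈ Icc 1 N | #{j ∈ Icc 1 N | q j = i} ≤ 1})
      (a := q N)
    rw [Nat.card_Icc] at hgood
    lia
  have exists_preimage (i : ℕ) (hi : i ∈ s) : ∃ p, ∀ j ∈ Icc 1 N, q j = i → j = p := by
    obtain ⟨p, hp⟩ := card_le_one_iff_subset_singleton.1 (mem_filter.1 (mem_of_mem_erase hi)).2
    exact ⟨p, fun j hj h => mem_singleton.1 (hp (mem_filter.2 ⟨hj, h⟩))⟩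
  choose! p hp using exists_preimage
  set c : ℕ → ℕ → Prop := fun i j => ∃ i' ∈ Icc 1 N, q i' = i ∧
    (j = i' + 1 ∨ i' + 1 ∈ Icc 1 N ∧ j = q (i' + 1))
  have hirrefl (i : ℕ) (hi : i ∈ s) : ¬ c i i := by
    rintro ⟨i', hi', hqi', rfl | ⟨hsucc, hqsucc⟩⟩
    · exact hq i' hi' hqi'
    · exact absurd ((hp i hi i' hi' hqi').trans (hp i hi _ hsucc hqsucc.symm).symm) (by lia)
  have hneighbour (i : ℕ) (hi : i ∈ s) (j : ℕ) (_ : j ∈ s) (h : c i j ∨ c j i) :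
      j ∈ ({p i + 1, q (p i + 1), q (i - 1), q (p i - 1)} : Finset ℕ) := by
    simp only [mem_insert, mem_singleton]
    rcases h with ⟨i', hi', hqi', h⟩ | ⟨i', hi', rfl, rfl | ⟨hsucc, h⟩⟩
    · have := hp i hi i' hi' hqi'
      grind
    · simp
    · have := hp i hi (i' + 1) hsucc h.symm
      grind
  obtain ⟨L, hLs, hindep, hcard⟩ := exists_independent_card_le hirrefl hneighbour
    fun _ _ => card_le_four
  refine ⟨L, hLs.trans ((erase_subset _ _).trans (filter_subset _ _)), by lia, fun i hi hqi => ?_⟩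
  have hiN : i ≠ N := fun h => notMem_erase (q N) _ (h ▸ hLs hqi)
  have hsucc : i + 1 ∈ Icc 1 N := by rw [mem_Icc] at hi ⊢; lia
  exact ⟨(mem_Icc.1 hsucc).2, fun h => hindep _ hqi _ h ⟨i, hi, rfl, .inl rfl⟩,
    fun h => hindep _ hqi _ h ⟨i, hi, rfl, .inr ⟨hsucc, rfl⟩⟩⟩

end SparseIndices

section BackArcs

variable {α : Type*} {A : α → α → Prop}

/-- If `q i ∉ I`, then `a i` is entered from `u i`, which is reached through `a (q i)`; otherwise it
is entered from `a (i + 1)`, which is reached through `u (i + 1)`. -/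
lemma exists_arc_reachAvoiding_image {a u : ℕ → α} {q : ℕ → ℕ} {N : ℕ} {I : Set ℕ}
    (ha : Set.InjOn a (Set.Iic N)) (hpath : ∀ i < N, A (a (i + 1)) (a i))
    (hu : ∀ i ∈ Icc 1 N, A (u i) (a i)) (hq : ∀ i ∈ Icc 1 N, q i = 0 ∨ q i + 2 ≤ i)
    (hreach : ∀ i ∈ Icc 1 N, ReachAvoiding A (a '' Set.Icc 1 N) (a 0) (u i) ∨ u i = a (q i))
    (hIN : I ⊆ Set.Icc 1 N)
    (hI : ∀ i ∈ Icc 1 N, q i ∈ I → i + 1 ≤ N ∧ i + 1 ∉ I ∧ q (i + 1) ∉ I)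
    {i : ℕ} (hi : i ∈ Icc 1 N) : ∃ x, A x (a i) ∧ ReachAvoiding A (a '' I) (a 0) x := by
  have image_notMem {j} (hj : j ≤ N) (hjI : j ∉ I) : a j ∉ a '' I :=
    fun h => hjI ((ha.mem_image_iff (fun _ hi => (hIN hi).2) hj).1 h)
  induction i using Nat.strong_induction_on with
  | _ i ih =>
  have reach_tail {j} (hj : j ∈ Icc 1 N) (hji : q j < i) (hjI : q j ∉ I) :
      ReachAvoiding A (a '' I) (a 0) (u j) := by
    rcases hreach j hj with h | h
    · exact h.mono (Set.image_mono hIN)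
    rw [h]
    rcases Nat.eq_zero_or_pos (q j) with h0 | hpos
    · exact h0 ▸ .refl
    have hqN : q j ≤ N := by have := hq j hj; rw [mem_Icc] at hj; lia
    obtain ⟨x, hx, hreach_x⟩ := ih (q j) hji (mem_Icc.2 ⟨hpos, hqN⟩)
    exact hreach_x.tail ⟨hx, image_notMem hqN hjI⟩
  have hi1 := (mem_Icc.1 hi).1
  have hqi := hq i hi
  by_cases hqI : q i ∈ I
  · obtain ⟨hsuccN, hsucc, hqsucc⟩ := hI i hi hqI
    have hsucc_mem : i + 1 ∈ Icc 1 N := mem_Icc.2 ⟨by lia, hsuccN⟩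
    have hlt : q (i + 1) < i := by have := hq _ hsucc_mem; lia
    exact ⟨a (i + 1), hpath i hsuccN, (reach_tail hsucc_mem hlt hqsucc).tail
      ⟨hu _ hsucc_mem, image_notMem hsuccN hsucc⟩⟩
  · exact ⟨u i, hu i hi, reach_tail hi (by lia) hqI⟩

lemma exists_large_outTree_of_backArcs {a : ℕ → α} {N : ℕ} (ha : Set.InjOn a (Set.Iic N))
    (hpath : ∀ i < N, A (a (i + 1)) (a i))
    (hback : ∀ i ∈ Icc 1 N, ∃ u, A u (a i) ∧
      (ReachAvoiding A (a '' Set.Icc 1 N) (a 0) u ∨ ∃ j, j + 2 ≤ i ∧ u = a j)) :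
    ∃ L : Finset α, N ≤ 10 * #L + 2 ∧ a 0 ∉ L ∧
      ∀ l ∈ L, ∃ x, A x l ∧ ReachAvoiding A L (a 0) x := by
  classical
  have exists_index (i : ℕ) (hi : i ∈ Icc 1 N) : ∃ u q, A u (a i) ∧ (q = 0 ∨ q + 2 ≤ i) ∧
      (ReachAvoiding A (a '' Set.Icc 1 N) (a 0) u ∨ u = a q) := by
    obtain ⟨u, hu, h | ⟨j, hj, h⟩⟩ := hback i hi
    · exact ⟨u, 0, hu, .inl rfl, .inl h⟩
    · exact ⟨u, j, hu, .inr hj, .inr h⟩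
  have : Nonempty α := ⟨a 0⟩
  choose! u q hu hq hreach using exists_index
  obtain ⟨I, hIN, hcard, hI⟩ := exists_sparse_indices N q fun i hi => by have := hq i hi; lia
  refine ⟨I.image a, ?_, fun h => ?_, forall_mem_image.2 fun i hi => ?_⟩
  · rwa [card_image_of_injOn (ha.mono fun i hi => (mem_Icc.1 (hIN hi)).2)]
  · obtain ⟨i, hi, h⟩ := mem_image.1 h
    obtain ⟨hi1, hiN⟩ := mem_Icc.1 (hIN hi)
    exact absurd (ha hiN N.zero_le h) (by lia)
  · rw [coe_image]
    exact exists_arc_reachAvoiding_image ha hpath hu hq hreach (coe_Icc 1 N ▸ coe_subset.2 hIN) hI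
      (hIN hi)

end BackArcs

section MaxLeaf

variable {α : Type*} [Fintype α] {A : α → α → Prop} {r u v b : α} {f : α → α} {N : ℕ}

/-- A parent map whose out-branching has the maximum number of leaves. -/
structure IsMaxLeaf (A : α → α → Prop) (r : α) (f : α → α) : Prop extends IsParentMap A r f where
  card_leafFinset_le : ∀ r' f', IsParentMap A r' f' → #(leafFinset r' f') ≤ #(leafFinset r f)

lemma IsParentMap.exists_isMaxLeaf (hf : IsParentMap A r f) : ∃ r f, IsMaxLeaf A r f := by
  classical
  obtain ⟨⟨r', f'⟩, h, hmax⟩ := exists_max_image {p : α × (α → α) | IsParentMap A p.1 p.2}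
    (fun p => #(leafFinset p.1 p.2)) ⟨(r, f), by simpa using hf⟩
  simp only [mem_filter, mem_univ, true_and, Prod.forall] at h hmax
  exact ⟨r', f', h, hmax⟩

open Classical in
/-- The children of the branching vertices, i.e. the vertices that have a sibling. -/
noncomputable def branchChildren (r : α) (f : α → α) : Finset α :=
  {v | v ≠ r ∧ ∃ w ≠ r, w ≠ v ∧ f w = f v}

lemma mem_branchChildren : v ∈ branchChildren r f ↔ v ≠ r ∧ ∃ w ≠ r, w ≠ v ∧ f w = f v := by
  simp [branchChildren]

lemma card_branchChildren_add_two_le (r : α) (f : α → α) :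
    #(branchChildren r f) + 2 ≤ 2 * #(leafFinset r f) := by
  classical
  have parent_notMem {v} (hv : v ≠ r) : f v ∈ (leafFinset r f)ᶜ :=
    mem_compl.2 fun h => mem_leafFinset.1 h v hv rfl
  have subset_erase : branchChildren r f ⊆ univ.erase r :=
    fun v hv => mem_erase.2 ⟨(mem_branchChildren.1 hv).1, mem_univ v⟩
  have fiber_le (w : α) (hw : w ∈ (leafFinset r f)ᶜ) :
      #{v ∈ branchChildren r f | f v = w} + 2 ≤ 2 * #{v ∈ univ.erase r | f v = w} := by
    have hle : #{v ∈ branchChildren r f | f v = w} ≤ #{v ∈ univ.erase r | f v = w} :=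
      card_le_card (filter_subset_filter _ subset_erase)
    rcases eq_empty_or_nonempty {v ∈ branchChildren r f | f v = w} with h | ⟨v, hv⟩
    · obtain ⟨v, hvr, hvw⟩ : ∃ v ≠ r, f v = w := by simpa using hw
      have hpos : 0 < #{v ∈ univ.erase r | f v = w} := card_pos.2 ⟨v, by simp [hvr, hvw]⟩
      rw [h, card_empty]
      lia
    · obtain ⟨hv_mem, rfl⟩ := mem_filter.1 hv
      obtain ⟨hvr, v', hv'r, hne, hv'⟩ := mem_branchChildren.1 hv_mem
      have htwo : 1 < #{x ∈ univ.erase r | f x = f v} :=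
        one_lt_card.2 ⟨v', by simp [hv'r, hv'], v, by simp [hvr], hne⟩
      lia
  have mapsTo_erase : ∀ v ∈ univ.erase r, f v ∈ (leafFinset r f)ᶜ :=
    fun v hv => parent_notMem (ne_of_mem_erase hv)
  have mapsTo_branch : ∀ v ∈ branchChildren r f, f v ∈ (leafFinset r f)ᶜ :=
    fun v hv => mapsTo_erase v (subset_erase hv)
  have hsum := sum_le_sum fiber_le
  rw [sum_add_distrib, ← mul_sum, sum_const, smul_eq_mul,
    ← card_eq_sum_card_fiberwise mapsTo_branch, ← card_eq_sum_card_fiberwise mapsTo_erase,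
    card_erase_of_mem (mem_univ r), card_univ, card_compl] at hsum
  have hleaf := card_le_univ (leafFinset r f)
  have hpos : 0 < Fintype.card α := Fintype.card_pos_iff.2 ⟨r⟩
  lia

open Classical in
/-- The heads `v` of the arcs `(u, v)` for which making `v` a child of `u` turns the old parent of
`v` into a leaf. -/
noncomputable def improvingHeads (A : α → α → Prop) (r : α) (f : α → α) (u : α) : Finset α :=
  {v | A u v ∧ ¬ IsAncestor f v u ∧ v ∉ branchChildren r f ∧ f v ≠ u}

lemma mem_improvingHeads : v ∈ improvingHeads A r f u ↔
    A u v ∧ ¬ IsAncestor f v u ∧ v ∉ branchChildren r f ∧ f v ≠ u := by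
  simp [improvingHeads]

/-- Moving all the improving heads below `u` at once makes leaves of their old parents, at the
expense of `u` alone. -/
lemma IsMaxLeaf.card_improvingHeads_le [DecidableEq α] (hf : IsMaxLeaf A r f) (u : α) :
    #(improvingHeads A r f u) ≤ if u ∈ leafFinset r f then 1 else 0 := by
  set H := improvingHeads A r f u
  have ne_root {v} (hv : v ∈ H) : v ≠ r := by
    rintro rfl
    exact (mem_improvingHeads.1 hv).2.1 (hf.reach u)
  have no_sibling {v w} (hv : v ∈ H) (hw : w ≠ r) (h : f w = f v) : w = v := by
    by_contra hne
    exact (mem_improvingHeads.1 hv).2.2.1 (mem_branchChildren.2 ⟨ne_root hv, w, hw, hne, h⟩)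
  have hleaves : (leafFinset r f).erase u ∪ H.image f ⊆
      leafFinset r (H.piecewise (fun _ => u) f) := by
    refine union_subset (fun x hx => ?_) (image_subset_iff.2 fun v hv => ?_)
    all_goals refine mem_leafFinset.2 fun w hw => ?_
    all_goals by_cases hwH : w ∈ H
    all_goals simp only [hwH, piecewise_eq_of_mem, piecewise_eq_of_notMem, not_false_iff]
    · exact (ne_of_mem_erase hx).symm
    · exact mem_leafFinset.1 (mem_of_mem_erase hx) w hw
    · exact (mem_improvingHeads.1 hv).2.2.2.symm
    · exact fun h => hwH (no_sibling hv hw h ▸ hv)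
  have hdisj : Disjoint ((leafFinset r f).erase u) (H.image f) := by
    refine disjoint_right.2 (forall_mem_image.2 fun v hv h => ?_)
    exact mem_leafFinset.1 (mem_of_mem_erase h) v (ne_root hv) rfl
  have hinj : Set.InjOn f (H : Set α) := fun v hv w hw h => no_sibling hw (ne_root hv) h
  have hcard := (card_le_card hleaves).trans <| hf.card_leafFinset_le _ _ <| hf.reroute
    (fun v hv => (mem_improvingHeads.1 hv).1) fun v hv => (mem_improvingHeads.1 hv).2.1
  rw [card_union_of_disjoint hdisj, card_image_of_injOn hinj] at hcard
  split_ifs with hu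
  · have hpos := card_pos.2 ⟨u, hu⟩
    rw [card_erase_of_mem hu] at hcard
    lia
  · rw [erase_eq_of_notMem hu] at hcard
    lia

open Classical in
/-- The vertices that a free segment of the out-branching has to avoid: the root, the vertices with
a sibling and the heads of improving arcs. -/
noncomputable def exceptionalFinset (A : α → α → Prop) (r : α) (f : α → α) : Finset α :=
  insert r (branchChildren r f ∪ univ.biUnion (improvingHeads A r f))

lemma mem_exceptionalFinset : v ∈ exceptionalFinset A r f ↔
    v = r ∨ v ∈ branchChildren r f ∨ ∃ u, v ∈ improvingHeads A r f u := by
  simp [exceptionalFinset]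

lemma IsMaxLeaf.card_exceptionalFinset_le (hf : IsMaxLeaf A r f) :
    #(exceptionalFinset A r f) ≤ 3 * #(leafFinset r f) := by
  classical
  have himproving : #(univ.biUnion (improvingHeads A r f)) ≤ #(leafFinset r f) := calc
    _ ≤ ∑ u, #(improvingHeads A r f u) := card_biUnion_le
    _ ≤ ∑ u, if u ∈ leafFinset r f then 1 else 0 :=
      sum_le_sum fun u _ => hf.card_improvingHeads_le u
    _ = #(leafFinset r f) := by simp [-mem_leafFinset]
  have hbranch := card_branchChildren_add_two_le r f
  calc #(exceptionalFinset A r f)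
      ≤ #(branchChildren r f) + #(univ.biUnion (improvingHeads A r f)) + 1 :=
        (card_insert_le _ _).trans (Nat.succ_le_succ (card_union_le _ _))
    _ ≤ 3 * #(leafFinset r f) := by lia

lemma ne_root_of_notMem_exceptionalFinset (hv : v ∉ exceptionalFinset A r f) : v ≠ r :=
  fun h => hv (mem_exceptionalFinset.2 (.inl h))

lemma eq_of_notMem_exceptionalFinset {w : α} (hv : v ∉ exceptionalFinset A r f) (hw : w ≠ r)
    (h : f w = f v) : w = v := by
  by_contra hne
  exact hv (mem_exceptionalFinset.2 (.inr (.inl (mem_branchChildren.2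
    ⟨ne_root_of_notMem_exceptionalFinset hv, w, hw, hne, h⟩))))

lemma isAncestor_of_notMem_exceptionalFinset (hv : v ∉ exceptionalFinset A r f) (huv : A u v)
    (hu : u ≠ f v) : IsAncestor f v u := by
  by_contra hanc
  simp only [mem_exceptionalFinset, not_or, not_exists] at hv
  exact hv.2.2 u (mem_improvingHeads.2 ⟨huv, hanc, hv.2.1, hu.symm⟩)

lemma exists_iterate_notMem {H : Finset α} {m : ℕ} (hinj : Set.InjOn f {v | v ∉ H})
    (hcard : #H * m < Fintype.card α) : ∃ b, ∀ i < m, f^[i] b ∉ H := by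
  classical
  by_contra! hex
  have hexists (v : α) : ∃ n, f^[n] v ∈ H := (hex v).imp fun _ => And.right
  have eq_of_iterate_eq (n : ℕ) (v w : α) (hv : ∀ i < n, f^[i] v ∉ H) (hw : ∀ i < n, f^[i] w ∉ H)
      (h : f^[n] v = f^[n] w) : v = w := by
    induction n generalizing v w with
    | zero => exact h
    | succ n ih =>
      refine hinj (hv 0 n.succ_pos) (hw 0 n.succ_pos) (ih (f v) (f w) ?_ ?_ h)
      · exact fun i hi => hv (i + 1) (by lia)
      · exact fun i hi => hw (i + 1) (by lia)
  have hle : #(univ : Finset α) ≤ #(H ×ˢ range m) := by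
    refine card_le_card_of_injOn (fun v => (f^[Nat.find (hexists v)] v, Nat.find (hexists v)))
      (fun v _ => ?_) fun v _ w _ h => ?_
    · obtain ⟨i, him, hi⟩ := hex v
      exact mem_product.2 ⟨Nat.find_spec (hexists v),
        mem_range.2 ((Nat.find_min' _ hi).trans_lt him)⟩
    · obtain ⟨hvw, hn⟩ := Prod.mk.inj h
      exact eq_of_iterate_eq (Nat.find (hexists v)) v w (fun i hi => Nat.find_min _ hi)
        (fun i hi => Nat.find_min _ (hn ▸ hi)) (hvw.trans (by rw [hn]))
  rw [card_univ, card_product, card_range] at hle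
  lia

lemma IsParentMap.isAncestor_or_eq_iterate (hf : IsParentMap A r f) {i : ℕ}
    (hb : ∀ j ≤ i, f^[j] b ∉ exceptionalFinset A r f) (h : IsAncestor f (f^[i] b) u) :
    IsAncestor f b u ∨ ∃ j ≤ i, u = f^[j] b := by
  induction i with
  | zero => exact .inl h
  | succ i ih =>
    obtain ⟨n | n, hn⟩ := h
    · exact .inr ⟨i + 1, le_rfl, hn⟩
    rw [Function.iterate_succ_apply', Function.iterate_succ_apply'] at hn
    have hne : f^[n] u ≠ r := by
      intro hr
      rw [hr, hf.root, ← Function.iterate_succ_apply' f] at hn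
      exact ne_root_of_notMem_exceptionalFinset (hb (i + 1) le_rfl) hn.symm
    have hanc : IsAncestor f (f^[i] b) u :=
      ⟨n, eq_of_notMem_exceptionalFinset (hb i (by lia)) hne hn⟩
    exact (ih (fun j hj => hb j (by lia)) hanc).imp_right fun ⟨j, hj, hu⟩ => ⟨j, by lia, hu⟩

lemma IsParentMap.exists_backArc (hf : IsParentMap A r f) (hirrefl : ∀ v, ¬ A v v)
    (hdeg : ∀ v y, A v y → ∀ x, ∃ u, A u v ∧ u ≠ x ∧ u ≠ y)
    (hb : ∀ i ≤ N, f^[i] b ∉ exceptionalFinset A r f) {i : ℕ} (hi : i ∈ Icc 1 N) :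
    ∃ u, A u (f^[i] b) ∧ (ReachAvoiding A ((fun j => f^[j] b) '' Set.Icc 1 N) b u ∨
      ∃ j, j + 2 ≤ i ∧ u = f^[j] b) := by
  obtain ⟨hi1, hiN⟩ := mem_Icc.1 hi
  have ne_root {j} (hj : j ≤ N) : f^[j] b ≠ r := ne_root_of_notMem_exceptionalFinset (hb j hj)
  have harc : A (f^[i] b) (f^[i - 1] b) := by
    have := hf.arc _ (ne_root (j := i - 1) (by lia))
    rwa [← Function.iterate_succ_apply' f, Nat.succ_eq_add_one, Nat.sub_add_cancel hi1] at this
  obtain ⟨u, hu, hne_parent, hne_child⟩ := hdeg _ _ harc (f (f^[i] b))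
  refine ⟨u, hu, ?_⟩
  rcases hf.isAncestor_or_eq_iterate (fun j hj => hb j (hj.trans hiN))
    (isAncestor_of_notMem_exceptionalFinset (hb i hiN) hu hne_parent) with ⟨n, hn⟩ | ⟨j, hj, rfl⟩
  · have hpath : ∀ k < n, f^[k] u ∉ (fun j => f^[j] b) '' Set.Icc 1 N := by
      rintro k hk ⟨j, hj, hjk : f^[j] b = f^[k] u⟩
      have : 1 ≤ j := hj.1
      refine ne_root N.zero_le (hf.eq_root_of_iterate_eq (n := n - k + j - 1) ?_)
      calc f^[n - k + j - 1 + 1] b = f^[n - k] (f^[j] b) := by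
            rw [← Function.iterate_add_apply]
            congr 1
            lia
        _ = b := by rw [hjk, ← Function.iterate_add_apply, Nat.sub_add_cancel hk.le, hn]
    have hreach := hf.reachAvoiding_iterate hpath
    rw [hn] at hreach
    exact .inl hreach
  · have hji : j ≠ i := fun h => hirrefl _ (h ▸ hu)
    have hji' : j ≠ i - 1 := fun h => hne_child (h ▸ rfl)
    exact .inr ⟨j, by lia, rfl⟩

/-- Unless `card α ≤ 144 k ^ 2`, where `k` is the number of leaves, the at most `3 k` exceptional
vertices leave a free segment of `48 k` vertices. -/
lemma IsMaxLeaf.card_le (hf : IsMaxLeaf A r f) (hirrefl : ∀ v, ¬ A v v)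
    (havoid : ∀ u v, A u v → ¬ ReflTransGen A v r → ReachAvoiding A {v} r u)
    (hdeg : ∀ v y, A v y → ∀ x, ∃ u, A u v ∧ u ≠ x ∧ u ≠ y) :
    Fintype.card α ≤ 144 * #(leafFinset r f) ^ 2 := by
  by_contra! hlarge
  set k := #(leafFinset r f)
  have hk : 1 ≤ k := by have := card_branchChildren_add_two_le r f; lia
  have hinj : Set.InjOn f {v | v ∉ exceptionalFinset A r f} := fun v hv w hw h =>
    eq_of_notMem_exceptionalFinset hw (ne_root_of_notMem_exceptionalFinset hv) h
  obtain ⟨b, hb⟩ := exists_iterate_notMem hinj (m := 48 * k) <| calc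
    _ ≤ 3 * k * (48 * k) := Nat.mul_le_mul_right _ hf.card_exceptionalFinset_le
    _ = 144 * k ^ 2 := by ring
    _ < Fintype.card α := hlarge
  replace hb : ∀ i ≤ 48 * k - 1, f^[i] b ∉ exceptionalFinset A r f := fun i hi => hb i (by lia)
  have hne (i : ℕ) (hi : i ≤ 48 * k - 1) : f^[i] b ≠ r :=
    ne_root_of_notMem_exceptionalFinset (hb i hi)
  obtain ⟨L, hcard, hbL, hL⟩ := exists_large_outTree_of_backArcs (hf.injOn_iterate hne)
    (fun i hi => Function.iterate_succ_apply' f i b ▸ hf.arc _ (hne i hi.le))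
    fun i hi => hf.exists_backArc hirrefl hdeg hb hi
  obtain ⟨r', f', hf', hLf'⟩ := exists_isParentMap_card_le_three_mul hf.reflTransGen havoid hbL hL
  have hmax : #(leafFinset r' f') ≤ k := hf.card_leafFinset_le r' f' hf'
  lia

end MaxLeaf

section OutBranching

variable {V : Type} {D T : DirGraph V} {u v : V}

/-- The arc relation of `D`, on the type of its vertices. -/
def adj (D : DirGraph V) (u v : D.verts) : Prop := (u.1, v.1) ∈ D.arcs

lemma Reaches.reflTransGen (h : T.Reaches u v) :
    ReflTransGen (fun x y => (x, y) ∈ T.arcs) u v := by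
  obtain ⟨l, ⟨hne, -, -, hl⟩, hhead, hlast⟩ := h
  rw [List.head?_eq_some_head hne, Option.some_inj] at hhead
  rw [List.getLast?_eq_some_getLast hne, Option.some_inj] at hlast
  subst hhead hlast
  exact List.relationReflTransGen_of_exists_isChain l hl hne

lemma reaches_of_strictMono {d : T.verts → ℕ} (hd : ∀ u v, T.adj u v → d u < d v)
    {u v : T.verts} (h : ReflTransGen T.adj u v) : T.Reaches u v := by
  obtain ⟨l, hl, hlast⟩ := List.exists_isChain_cons_of_relationReflTransGen h
  have hsorted : ((u :: l).map d).Pairwise (· < ·) :=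
    ((List.isChain_map d).2 (hl.imp hd)).pairwise
  have hnodup : (u :: l).Nodup := List.Nodup.of_map d (hsorted.imp ne_of_lt)
  refine ⟨(u :: l).map Subtype.val,
    ⟨List.cons_ne_nil _ _, hnodup.map Subtype.val_injective,
      List.forall_mem_map.2 fun x _ => x.2, (List.isChain_map _).2 hl⟩, rfl, ?_⟩
  rw [List.getLast?_map, List.getLast?_eq_some_getLast (List.cons_ne_nil _ _), hlast]
  rfl

namespace IsOutTree

variable {r : V}

lemma ne_root (hT : T.IsOutTree r) (hfin : T.verts.Finite) (h : (u, v) ∈ T.arcs) : v ≠ r := by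
  rintro rfl
  have harcs : T.arcs.Finite := (hfin.prod hfin).subset fun a ha => hT.arcs_mem a ha
  have hempty := (Set.ncard_eq_zero (harcs.subset (Set.sep_subset _ _))).1 hT.root_indeg
  exact Set.eq_empty_iff_forall_notMem.1 hempty (u, v) ⟨h, rfl⟩

lemma existsUnique_parent (hT : T.IsOutTree r) (hv : v ∈ T.verts) (hvr : v ≠ r) :
    ∃! u, (u, v) ∈ T.arcs := by
  obtain ⟨⟨u, w⟩, ha⟩ := Set.ncard_eq_one.1 (hT.indeg_one v hv hvr)
  obtain ⟨huv, rfl⟩ : (u, w) ∈ {a ∈ T.arcs | a.2 = v} := ha ▸ rfl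
  refine ⟨u, huv, fun x hx => ?_⟩
  have hxa : (x, w) ∈ ({(u, w)} : Set (V × V)) := ha ▸ ⟨hx, rfl⟩
  exact (Prod.mk.inj hxa).1

end IsOutTree

lemma IsOutBranching.exists_isParentMap {r : V} (hT : IsOutBranching T D r)
    (hfin : D.verts.Finite) : ∃ (s : D.verts) (f : D.verts → D.verts), IsParentMap D.adj s f ∧
      ∀ u v : D.verts, (u.1, v.1) ∈ T.arcs → v ≠ s ∧ f v = u := by
  obtain ⟨⟨hT, -, hsub⟩, hverts⟩ := hT
  have mem_verts {v} (hv : v ∈ D.verts) : v ∈ T.verts := hverts.symm ▸ hv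
  set s : D.verts := ⟨r, hverts ▸ hT.root_mem⟩
  have hne {u v : D.verts} (h : (u.1, v.1) ∈ T.arcs) : v ≠ s :=
    fun hvs => hT.ne_root (hverts ▸ hfin) h (congrArg Subtype.val hvs)
  have exists_parent (v : D.verts) :
      ∃ u : D.verts, (v = s → u = s) ∧ (v ≠ s → (u.1, v.1) ∈ T.arcs) := by
    by_cases hv : v = s
    · exact ⟨s, by simp [hv]⟩
    · obtain ⟨u, hu, -⟩ := hT.existsUnique_parent (mem_verts v.2) fun h => hv (Subtype.ext h)
      exact ⟨⟨u, hverts ▸ (hT.arcs_mem _ hu).1⟩, by simp [hv, hu]⟩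
  choose f hroot harc using exists_parent
  have eq_parent {u v : D.verts} (h : (u.1, v.1) ∈ T.arcs) : f v = u :=
    Subtype.ext <| (hT.existsUnique_parent (mem_verts v.2) fun hv => hne h (Subtype.ext hv)).unique
      (harc v (hne h)) h
  refine ⟨s, f, ⟨hroot s rfl, fun v hv => hsub (harc v hv), fun ⟨v, hv⟩ => ?_⟩,
    fun u v h => ⟨hne h, eq_parent h⟩⟩
  induction (hT.reach_root v (mem_verts hv)).reflTransGen with
  | refl => exact ⟨0, rfl⟩
  | @tail u v _ huv ih =>
    have hu : u ∈ D.verts := hverts ▸ (hT.arcs_mem _ huv).1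
    obtain ⟨n, hn⟩ := ih hu
    exact ⟨n + 1, by rw [Function.iterate_succ_apply, eq_parent (u := ⟨u, hu⟩) huv, hn]⟩

lemma mem_verts_of_not_useless (h : ¬ Useless D (u, v)) : u ∈ D.verts ∧ v ∈ D.verts := by
  simp only [Useless, not_forall, not_not] at h
  obtain ⟨T, r, hT, huv⟩ := h
  exact hT.2 ▸ hT.1.1.arcs_mem _ huv

lemma exists_isParentMap_of_not_useless (hfin : D.verts.Finite) {u v : D.verts}
    (h : ¬ Useless D (u.1, v.1)) : ∃ s f, IsParentMap D.adj s f ∧ v ≠ s ∧ f v = u := by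
  simp only [Useless, not_forall, not_not] at h
  obtain ⟨T, r, hT, huv⟩ := h
  obtain ⟨s, f, hf, hfT⟩ := hT.exists_isParentMap hfin
  exact ⟨s, f, hf, hfT u v huv⟩

lemma ne_of_not_useless (hfin : D.verts.Finite) {u v : D.verts} (h : ¬ Useless D (u.1, v.1)) :
    u ≠ v := by
  rintro rfl
  obtain ⟨s, f, hf, hvs, hv⟩ := exists_isParentMap_of_not_useless hfin h
  exact hvs (hf.eq_root_of_iterate_eq (n := 0) hv)

lemma reachAvoiding_of_not_useless (hfin : D.verts.Finite) {r u v : D.verts}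
    (h : ¬ Useless D (u.1, v.1)) (hr : ∀ w, ReflTransGen D.adj r w)
    (hv : ¬ ReflTransGen D.adj v r) : ReachAvoiding D.adj {v} r u := by
  obtain ⟨s, f, hf, hvs, rfl⟩ := exists_isParentMap_of_not_useless hfin h
  have hreach : ReachAvoiding D.adj {v} s (f v) := by
    obtain ⟨n, hn⟩ := hf.reach (f v)
    have hpath := hf.reachAvoiding_iterate (S := {v}) (n := n) fun i _ hi =>
      hvs (hf.eq_root_of_iterate_eq hi)
    rwa [hn] at hpath
  exact (reachAvoiding_singleton_of_not_reflTransGen (hr s) (hf.reflTransGen r) hv).trans hreach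

end OutBranching

section ParentMapDigraph

variable {V : Type} {D : DirGraph V} {r : D.verts} {f : D.verts → D.verts}

/-- The spanning subdigraph of `D` whose arcs are the pairs `(f v, v)` with `v ≠ r`. -/
def ofParentMap (D : DirGraph V) (r : D.verts) (f : D.verts → D.verts) : DirGraph V :=
  ⟨D.verts, {a | ∃ v ≠ r, a = ((f v).1, v.1)}⟩

lemma IsParentMap.isOutBranching_ofParentMap (hf : IsParentMap D.adj r f) :
    IsOutBranching (D.ofParentMap r f) D r := by
  refine ⟨⟨⟨?_, r.2, ?_, fun v hv hvr => ?_, fun v hv => ?_⟩, subset_rfl, ?_⟩, rfl⟩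
  · rintro _ ⟨v, -, rfl⟩
    exact ⟨(f v).2, v.2⟩
  · have hempty : {a ∈ (D.ofParentMap r f).arcs | a.2 = r} = ∅ := by
      rw [Set.eq_empty_iff_forall_notMem]
      rintro _ ⟨⟨v, hv, rfl⟩, h⟩
      exact hv (Subtype.ext h)
    rw [inDeg, hempty, Set.ncard_empty]
  · refine Set.ncard_eq_one.2 ⟨((f ⟨v, hv⟩).1, v), Set.eq_singleton_iff_unique_mem.2 ⟨?_, ?_⟩⟩
    · exact ⟨⟨⟨v, hv⟩, fun h => hvr (congrArg Subtype.val h), rfl⟩, rfl⟩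
    · rintro _ ⟨⟨w, -, rfl⟩, rfl⟩
      rfl
  · obtain ⟨d, hd⟩ := hf.exists_depth
    have hself : IsParentMap (D.ofParentMap r f).adj r f :=
      ⟨hf.root, fun v hv => ⟨v, hv, rfl⟩, hf.reach⟩
    refine reaches_of_strictMono (T := D.ofParentMap r f) (d := d) ?_ (hself.reflTransGen ⟨v, hv⟩)
    rintro u v ⟨w, hw, h⟩
    obtain ⟨hu, hv⟩ := Prod.mk.inj h
    rw [Subtype.ext hu, Subtype.ext hv]
    exact hd w hw
  · rintro _ ⟨v, hv, rfl⟩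
    exact hf.arc v hv

lemma bddAbove_leaves (hfin : D.verts.Finite) : BddAbove
    {k | ∃ (T : DirGraph V) (r : V), IsOutBranching T D r ∧ (leaves T).ncard = k} := by
  refine ⟨D.verts.ncard, ?_⟩
  rintro _ ⟨T, r, hT, rfl⟩
  exact Set.ncard_le_ncard (hT.2 ▸ Set.sep_subset _ _) hfin

lemma IsParentMap.card_leafFinset_le_ellS [Fintype D.verts] (hf : IsParentMap D.adj r f) :
    #(leafFinset r f) ≤ ellS D := by
  classical
  have hsub : ((leafFinset r f).image Subtype.val : Set V) ⊆ leaves (D.ofParentMap r f) := by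
    simp only [coe_image, Set.image_subset_iff]
    intro v hv
    have hempty : {a ∈ (D.ofParentMap r f).arcs | a.1 = v} = ∅ := by
      rw [Set.eq_empty_iff_forall_notMem]
      rintro _ ⟨⟨w, hw, rfl⟩, h⟩
      exact mem_leafFinset.1 hv w hw (Subtype.ext h)
    exact ⟨v.2, by rw [outDeg, hempty, Set.ncard_empty]⟩
  calc #(leafFinset r f) = #((leafFinset r f).image Subtype.val) :=
        (card_image_of_injective _ Subtype.val_injective).symm
    _ ≤ (leaves (D.ofParentMap r f)).ncard := by
      rw [← Set.ncard_coe_finset]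
      exact Set.ncard_le_ncard hsub ((Set.toFinite D.verts).subset (Set.sep_subset _ _))
    _ ≤ ellS D := le_csSup (bddAbove_leaves (Set.toFinite _))
        ⟨_, _, hf.isOutBranching_ofParentMap, rfl⟩

end ParentMapDigraph

section Bound

variable {V : Type} {D : DirGraph V}

lemma inDeg_eq_ncard (D : DirGraph V) (v : V) : D.inDeg v = {u | (u, v) ∈ D.arcs}.ncard := by
  have himage : {a ∈ D.arcs | a.2 = v} = (·, v) '' {u | (u, v) ∈ D.arcs} := by
    ext ⟨u, w⟩
    simp only [Set.mem_ofPred_eq, Set.mem_image, Prod.mk.injEq]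
    grind
  rw [inDeg, himage, Set.ncard_image_of_injective _ (Prod.mk_left_injective v)]

lemma two_le_ncard_of_inDeg {v y : V} (h : 3 ≤ D.inDeg v ∨ (y, v) ∉ D.arcs ∧ 2 ≤ D.inDeg v) :
    2 ≤ {u | (u, v) ∈ D.arcs ∧ u ≠ y}.ncard := by
  rw [inDeg_eq_ncard] at h
  rcases h with h | ⟨hy, h⟩
  · exact (Nat.sub_le_sub_right h 1).trans (Set.pred_ncard_le_ncard_sdiff_singleton _ y)
  · rwa [Set.ofPred_and, Set.inter_eq_left.2]
    rintro u hu rfl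
    exact hy hu

lemma ncard_verts_le (hfin : D.verts.Finite)
    (hbr : ∃ (T : DirGraph V) (r : V), IsOutBranching T D r)
    (hu : ∀ a ∈ D.arcs, ¬ Useless D a)
    (hdeg : ∀ v y, (v, y) ∈ D.arcs → 2 ≤ {u | (u, v) ∈ D.arcs ∧ u ≠ y}.ncard) :
    D.verts.ncard ≤ 144 * ellS D ^ 2 := by
  have := hfin.fintype
  obtain ⟨T, r, hT⟩ := hbr
  obtain ⟨r₀, f₀, hf₀, -⟩ := hT.exists_isParentMap hfin
  obtain ⟨r, f, hf⟩ := hf₀.exists_isMaxLeaf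
  have exists_third (v y : D.verts) (hvy : D.adj v y) (x : D.verts) :
      ∃ u, D.adj u v ∧ u ≠ x ∧ u ≠ y := by
    obtain ⟨u, ⟨huv, huy⟩, hux⟩ := Set.exists_ne_of_one_lt_ncard (hdeg v y hvy) x
    exact ⟨⟨u, (mem_verts_of_not_useless (hu _ huv)).1⟩, huv, fun h => hux (congrArg Subtype.val h),
      fun h => huy (congrArg Subtype.val h)⟩
  calc D.verts.ncard = Fintype.card D.verts := by
        rw [← Nat.card_coe_set_eq, Nat.card_eq_fintype_card]
    _ ≤ 144 * #(leafFinset r f) ^ 2 := hf.card_le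
      (fun v hv => ne_of_not_useless hfin (hu _ hv) rfl)
      (fun u v huv => reachAvoiding_of_not_useless hfin (hu _ huv) hf.reflTransGen) exists_third
    _ ≤ 144 * ellS D ^ 2 := by gcongr; exact hf.card_leafFinset_le_ellS

theorem ellS_ge_twelfth_sqrt_of_no_useless_general {V : Type} (D : DirGraph V)
    (hfin : D.verts.Finite) (hbr : ∃ (T : DirGraph V) (r : V), IsOutBranching T D r)
    (hu : ∀ a ∈ D.arcs, ¬ Useless D a)
    (hdeg : ∀ v y : V, (v, y) ∈ D.arcs → 2 ≤ {u | (u, v) ∈ D.arcs ∧ u ≠ y}.ncard) :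
    (1 / 12 : ℝ) * Real.sqrt D.verts.ncard ≤ (ellS D : ℝ) := by
  have hle : (D.verts.ncard : ℝ) ≤ (12 * ellS D) ^ 2 := by
    rw [mul_pow]
    exact_mod_cast ncard_verts_le hfin hbr hu hdeg
  have hsqrt : √(D.verts.ncard : ℝ) ≤ 12 * ellS D := Real.sqrt_le_iff.2 ⟨by positivity, hle⟩
  linarith

end Bound

end DirGraph

namespace DirGraph

theorem ellS_ge_twelfth_sqrt_of_no_useless {V : Type} [Fintype V]
    (D : DirGraph V) (n : ℕ) (hD : D.WellFormed) (hn : D.verts.ncard = n)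
    (hbr : ∃ (T : DirGraph V) (r : V), IsOutBranching T D r)
    (hu : ∀ a ∈ D.arcs, ¬ Useless D a)
    (hdeg : (∀ v ∈ D.verts, 3 ≤ D.inDeg v) ∨
      ((∀ u v : V, (u, v) ∈ D.arcs → (v, u) ∉ D.arcs) ∧
        ∀ v ∈ D.verts, 2 ≤ D.inDeg v)) :
    (1 / 12 : ℝ) * Real.sqrt n ≤ (ellS D : ℝ) := by
  subst hn
  exact ellS_ge_twelfth_sqrt_of_no_useless_general D (Set.toFinite _) hbr hu fun v y hvy =>
    two_le_ncard_of_inDeg <| hdeg.imp (fun h => h v (hD _ hvy).1)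
      fun h => ⟨h.1 v y hvy, h.2 v (hD _ hvy).1⟩

end DirGraph
end

section
/- For every integer k ≥ 1 there exists a digraph D that has at least one out-branching, contains no useless arcs, and satisfies ℓ(D) ≥ 5k and ℓ_s(D) = 2k (so ℓ(D)/ℓ_s(D) ≥ 2.5). -/
namespace DirGraph

/-!
The digraph is a chain of `k` gadgets on six inner vertices `a, …, f`, linked by `k + 1` ports
`0, …, k`. Gadget `i` is entered at port `i` and left at port `i + 1`, in exactly two ways:
`i → a → c → e → i + 1` and `i → b → f → d → e → i + 1`. The last port `k` moreover has arcs back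
to `a`, `b`, `c`, `d` of every gadget.

An out-tree rooted at port `k` may use all these arcs and reach `a, …, f` of every gadget by means
of the additional arcs `d → e` and `d → f`; all of them but `d` are then leaves. An out-branching,
however, has to start at port `0`, which has no in-neighbour, so its path to port `k` runs through
all gadgets and leaves only few of the inner vertices free to be leaves. If port `k` is not itself a
leaf, then at most two of them are, in each gadget. Otherwise the arcs from port `k` are all
missing, and only one inner vertex of each gadget can be a leaf.
-/

section OutTree

variable {V : Type} {T D : DirGraph V} {r u v w : V}

/-- The arc set of `D` as a relation, so that `Relation.ReflTransGen D.Adj` and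
`Relation.TransGen D.Adj` express the existence of directed walks. -/
def Adj (D : DirGraph V) (u v : V) : Prop := (u, v) ∈ D.arcs

/-- `D` has no directed cycle, phrased as: no vertex lies on a nonempty closed walk. -/
def IsAcyclic (D : DirGraph V) : Prop := ∀ v, ¬ Relation.TransGen D.Adj v v

theorem IsAcyclic.not_reflTransGen (hD : D.IsAcyclic) (huv : D.Adj u v) :
    ¬ Relation.ReflTransGen D.Adj v u :=
  fun h => hD u (.head' huv h)

theorem isAcyclic_of_rank {α : Type*} [Preorder α] (rank : V → α)
    (hrank : ∀ u v, D.Adj u v → rank u < rank v) : D.IsAcyclic := by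
  intro v hv
  have hlt := hv.lift (p := (· < ·)) rank hrank
  rw [Relation.transGen_eq_self] at hlt
  exact lt_irrefl (rank v) hlt

theorem Reaches.reflTransGen_s18 (h : D.Reaches u v) : Relation.ReflTransGen D.Adj u v := by
  obtain ⟨l, ⟨hne, -, -, hchain⟩, hhead, hlast⟩ := h
  rw [List.head?_eq_some_head hne, Option.some_inj] at hhead
  rw [List.getLast?_eq_some_getLast hne, Option.some_inj] at hlast
  exact hhead ▸ hlast ▸ List.relationReflTransGen_of_exists_isChain l hchain hne

theorem IsAcyclic.reaches (hD : D.IsAcyclic) (harcs : ∀ a ∈ D.arcs, a.2 ∈ D.verts)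
    (hu : u ∈ D.verts) (h : Relation.ReflTransGen D.Adj u v) : D.Reaches u v := by
  obtain ⟨l, hchain, hlast⟩ := List.exists_isChain_cons_of_relationReflTransGen h
  have hnodup : (u :: l).Nodup := by
    refine (hchain.imp fun _ _ => Relation.TransGen.single).pairwise.imp ?_
    rintro x _ hxy rfl
    exact hD x hxy
  have hverts : ∀ x ∈ u :: l, x ∈ D.verts :=
    hchain.induction (· ∈ D.verts) _ (fun _ _ hxy _ => harcs _ hxy) fun _ => hu
  exact ⟨u :: l, ⟨List.cons_ne_nil _ _, hnodup, hverts, hchain⟩, rfl,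
    by rw [List.getLast?_eq_some_getLast (List.cons_ne_nil _ _), hlast]⟩

theorem mem_leaves_iff [Finite V] : v ∈ T.leaves ↔ v ∈ T.verts ∧ ∀ w, ¬ T.Adj v w := by
  refine and_congr_right fun _ => ?_
  rw [outDeg, Set.ncard_eq_zero, Set.eq_empty_iff_forall_notMem]
  exact ⟨fun h w hw => h (v, w) ⟨hw, rfl⟩, by rintro h ⟨_, w⟩ ⟨hw, rfl⟩; exact h w hw⟩

theorem Adj.notMem_leaves [Finite V] (h : T.Adj u v) : u ∉ T.leaves :=
  fun hu => (mem_leaves_iff.1 hu).2 v h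

theorem IsOutTree.not_adj_root [Finite V] (hT : T.IsOutTree r) : ¬ T.Adj u r := fun h => by
  have hempty := (Set.ncard_eq_zero (Set.toFinite _)).1 hT.root_indeg
  exact Set.notMem_empty (u, r) (hempty ▸ ⟨h, rfl⟩)

theorem IsOutTree.existsUnique_adj (hT : T.IsOutTree r) (hv : v ∈ T.verts) (hvr : v ≠ r) :
    ∃! u, T.Adj u v := by
  obtain ⟨⟨u, x⟩, hux⟩ := Set.ncard_eq_one.1 (hT.indeg_one v hv hvr)
  obtain ⟨huv, rfl⟩ : (u, x) ∈ {a ∈ T.arcs | a.2 = v} := hux ▸ rfl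
  refine ⟨u, huv, fun w hw => ?_⟩
  have hmem : (w, x) ∈ {a ∈ T.arcs | a.2 = x} := ⟨hw, rfl⟩
  rw [hux] at hmem
  exact congrArg Prod.fst hmem

theorem IsOutTree.adj_left_unique [Finite V] (hT : T.IsOutTree r) (huw : T.Adj u w)
    (hvw : T.Adj v w) : u = v :=
  (hT.existsUnique_adj (hT.arcs_mem _ huw).2
    (by rintro rfl; exact hT.not_adj_root huw)).unique huw hvw

theorem IsOutTree.isAcyclic [Finite V] (hT : T.IsOutTree r) : T.IsAcyclic := by
  have hreach : ∀ v, Relation.ReflTransGen T.Adj r v → ¬ Relation.TransGen T.Adj v v := by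
    intro v hv
    induction hv with
    | refl =>
      intro hcycle
      obtain ⟨u, -, hu⟩ := Relation.TransGen.tail'_iff.1 hcycle
      exact hT.not_adj_root hu
    | tail _ huv ih =>
      -- A cycle through `v` enters `v` by its only in-arc, so it also passes through the parent.
      intro hcycle
      obtain ⟨u', hvu', hu'v⟩ := Relation.TransGen.tail'_iff.1 hcycle
      obtain rfl := hT.adj_left_unique huv hu'v
      exact ih (.head' huv hvu')
  intro v hv
  obtain ⟨w, hvw, -⟩ := Relation.TransGen.head'_iff.1 hv
  exact hreach v (hT.reach_root v (hT.arcs_mem _ hvw).1).reflTransGen_s18 hv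

/-- The digraph on `S` in which every vertex `v ≠ r` has the parent `p v` as its only in-neighbour;
the value `p r` is ignored. -/
def parentTree (S : Set V) (r : V) (p : V → V) : DirGraph V where
  verts := S
  arcs := {a | a.2 ∈ S ∧ a.2 ≠ r ∧ a.1 = p a.2}

theorem parentTree_isOutTree {S : Set V} {p : V → V} {α : Type*} [Preorder α] [WellFoundedLT α]
    (rank : V → α) (hr : r ∈ S) (hp : ∀ v ∈ S, v ≠ r → p v ∈ S ∧ rank (p v) < rank v) :
    (parentTree S r p).IsOutTree r where
  arcs_mem := by
    rintro ⟨u, v⟩ ⟨hv, hvr, rfl : u = p v⟩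
    exact ⟨(hp v hv hvr).1, hv⟩
  root_mem := hr
  root_indeg := by
    have : {a ∈ (parentTree S r p).arcs | a.2 = r} = ∅ :=
      Set.eq_empty_of_forall_notMem fun _ ⟨⟨_, hne, _⟩, he⟩ => hne he
    rw [inDeg, this, Set.ncard_empty]
  indeg_one v hv hvr := by
    refine Set.ncard_eq_one.2 ⟨(p v, v), Set.ext fun a => ⟨?_, ?_⟩⟩
    · rintro ⟨⟨-, -, ha⟩, rfl⟩
      exact Prod.ext ha rfl
    · rintro rfl
      exact ⟨⟨hv, hvr, rfl⟩, rfl⟩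
  reach_root v hv := by
    have hacyclic : (parentTree S r p).IsAcyclic := isAcyclic_of_rank rank <| by
      rintro u v ⟨hv, hvr, rfl : u = p v⟩
      exact (hp v hv hvr).2
    refine hacyclic.reaches (fun a ha => ha.1) hr ?_
    induction v using (InvImage.wf rank wellFounded_lt).induction with
    | _ v ih =>
      obtain rfl | hvr := eq_or_ne v r
      · exact .refl
      · obtain ⟨hpv, hlt⟩ := hp v hv hvr
        exact (ih (p v) hlt hpv).tail ⟨hv, hvr, rfl⟩

theorem parentTree_isOutTreeOf {S : Set V} {p : V → V} {α : Type*} [Preorder α] [WellFoundedLT α]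
    (rank : V → α) (hS : S ⊆ D.verts) (hr : r ∈ S)
    (hp : ∀ v ∈ S, v ≠ r → p v ∈ S ∧ D.Adj (p v) v ∧ rank (p v) < rank v) :
    IsOutTreeOf (parentTree S r p) D r := by
  refine ⟨parentTree_isOutTree rank hr fun v hv hvr => ⟨(hp v hv hvr).1, (hp v hv hvr).2.2⟩, hS, ?_⟩
  rintro ⟨u, v⟩ ⟨hv, hvr, rfl : u = p v⟩
  exact (hp v hv hvr).2.1

theorem mem_leaves_parentTree_iff [Finite V] {S : Set V} {p : V → V} :
    v ∈ (parentTree S r p).leaves ↔ v ∈ S ∧ ∀ w ∈ S, w ≠ r → v ≠ p w := by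
  rw [mem_leaves_iff]
  exact and_congr_right fun _ => forall_congr' fun w =>
    ⟨fun h hw hwr he => h ⟨hw, hwr, he⟩, fun h ⟨hw, hwr, he⟩ => h hw hwr he⟩

theorem IsOutTreeOf.ncard_leaves_le_ell [Finite V] (hT : IsOutTreeOf T D r) :
    T.leaves.ncard ≤ D.ell :=
  le_csSup ⟨Nat.card V, by rintro _ ⟨T, -, -, rfl⟩; exact Set.ncard_le_card _⟩ ⟨T, r, hT, rfl⟩

theorem IsOutBranching.ncard_leaves_le_ellS [Finite V] (hT : IsOutBranching T D r) :
    T.leaves.ncard ≤ D.ellS :=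
  le_csSup ⟨Nat.card V, by rintro _ ⟨T, -, -, rfl⟩; exact Set.ncard_le_card _⟩ ⟨T, r, hT, rfl⟩

theorem ellS_le {m : ℕ} (h : ∀ T r, IsOutBranching T D r → T.leaves.ncard ≤ m) : D.ellS ≤ m :=
  csSup_le' (by rintro _ ⟨T, r, hT, rfl⟩; exact h T r hT)

end OutTree

section Comap

variable {V W : Type} {T D : DirGraph V} {r u v : V}

/-- The digraph on `W` that corresponds to `D` under the bijection `e`; it serves to replace the
vertex type by `Fin n`. -/
def comap (e : W ≃ V) (D : DirGraph V) : DirGraph W where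
  verts := e ⁻¹' D.verts
  arcs := Prod.map e e ⁻¹' D.arcs

@[simp]
theorem comap_comap_symm (e : W ≃ V) (D : DirGraph V) : (D.comap e).comap e.symm = D := by
  simp [comap, ← Set.preimage_comp, Prod.map_comp_map]

theorem inDeg_comap (e : W ≃ V) (D : DirGraph V) (w : W) :
    (D.comap e).inDeg w = D.inDeg (e w) := by
  refine Set.ncard_congr' ((e.prodCongr e).subtypeEquiv fun a => ?_)
  simp [comap]

theorem outDeg_comap (e : W ≃ V) (D : DirGraph V) (w : W) :
    (D.comap e).outDeg w = D.outDeg (e w) := by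
  refine Set.ncard_congr' ((e.prodCongr e).subtypeEquiv fun a => ?_)
  simp [comap]

theorem ncard_leaves_comap (e : W ≃ V) (D : DirGraph V) :
    (D.comap e).leaves.ncard = D.leaves.ncard := by
  refine Set.ncard_congr' (e.subtypeEquiv fun w => and_congr_right fun _ => ?_)
  rw [outDeg_comap]

theorem Reaches.comap (e : W ≃ V) (h : D.Reaches u v) :
    (D.comap e).Reaches (e.symm u) (e.symm v) := by
  obtain ⟨l, ⟨hne, hnodup, hverts, hchain⟩, hhead, hlast⟩ := h
  refine ⟨l.map e.symm, ⟨by simpa using hne, hnodup.map e.symm.injective, ?_, ?_⟩, ?_, ?_⟩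
  · simpa [DirGraph.comap] using hverts
  · exact (List.isChain_map _).2 (hchain.imp fun _ _ h => by simpa [DirGraph.comap] using h)
  · simp [hhead]
  · simp [hlast]

theorem IsOutTree.comap (e : W ≃ V) (hT : T.IsOutTree r) : (T.comap e).IsOutTree (e.symm r) where
  arcs_mem a ha := hT.arcs_mem (Prod.map e e a) ha
  root_mem := by simpa [DirGraph.comap] using hT.root_mem
  root_indeg := by simpa [inDeg_comap] using hT.root_indeg
  indeg_one w hw hwr := by
    rw [inDeg_comap]
    exact hT.indeg_one _ hw fun h => hwr (e.eq_symm_apply.2 h)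
  reach_root w hw := by simpa using (hT.reach_root _ hw).comap e

theorem IsOutTreeOf.comap (e : W ≃ V) (hT : IsOutTreeOf T D r) :
    IsOutTreeOf (T.comap e) (D.comap e) (e.symm r) :=
  ⟨hT.1.comap e, Set.preimage_mono hT.2.1, Set.preimage_mono hT.2.2⟩

theorem IsOutBranching.comap (e : W ≃ V) (hT : IsOutBranching T D r) :
    IsOutBranching (T.comap e) (D.comap e) (e.symm r) :=
  ⟨hT.1.comap e, congrArg (e ⁻¹' ·) hT.2⟩

theorem ell_comap (e : W ≃ V) (D : DirGraph V) : (D.comap e).ell = D.ell := by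
  refine congrArg sSup (Set.ext fun m => ⟨?_, ?_⟩) <;> rintro ⟨T, r, hT, rfl⟩
  · exact ⟨_, _, by simpa using hT.comap e.symm, ncard_leaves_comap _ _⟩
  · exact ⟨_, _, hT.comap e, ncard_leaves_comap _ _⟩

theorem ellS_comap (e : W ≃ V) (D : DirGraph V) : (D.comap e).ellS = D.ellS := by
  refine congrArg sSup (Set.ext fun m => ⟨?_, ?_⟩) <;> rintro ⟨T, r, hT, rfl⟩
  · exact ⟨_, _, by simpa using hT.comap e.symm, ncard_leaves_comap _ _⟩
  · exact ⟨_, _, hT.comap e, ncard_leaves_comap _ _⟩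

theorem WellFormed.comap (e : W ≃ V) (hD : D.WellFormed) : (D.comap e).WellFormed := fun _ ha =>
  ⟨(hD _ ha).1, (hD _ ha).2.1, fun h => (hD _ ha).2.2 (congrArg e h)⟩

theorem not_useless_comap (e : W ≃ V) {a : W × W} (ha : ¬ Useless D (Prod.map e e a)) :
    ¬ Useless (D.comap e) a := fun h =>
  ha fun T r hT => h (T.comap e) (e.symm r) (hT.comap e)

end Comap

/-- The vertices of the chain of `k` gadgets: gadget `i` has the six inner vertices `a i, …, f i`,
and leads from `port i.castSucc` to `port i.succ`. -/
inductive Vertex (k : ℕ)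
  | port (i : Fin (k + 1))
  | a (i : Fin k)
  | b (i : Fin k)
  | c (i : Fin k)
  | d (i : Fin k)
  | e (i : Fin k)
  | f (i : Fin k)
  deriving Fintype

namespace Vertex

variable {k : ℕ}

/-- The vertex at which gadget `i` is entered. -/
abbrev entry (i : Fin k) : Vertex k := port i.castSucc

/-- The vertex at which gadget `i` is left. -/
abbrev exit (i : Fin k) : Vertex k := port i.succ

/-- The vertex at the end of the chain, from which arcs lead back into every gadget. -/
abbrev terminal : Vertex k := port (Fin.last k)

/-- The set of inner vertices of gadget `i`. -/
def innerVerts (i : Fin k) : Set (Vertex k) := {a i, b i, c i, d i, e i, f i}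

/-- The in-neighbours of a vertex in `gadgetChain k`. -/
def inNbrs : Vertex k → Set (Vertex k)
  | port i => Fin.cases ∅ (fun j => {e j}) i
  | a i => {entry i, terminal}
  | b i => {entry i, terminal}
  | c i => {a i, terminal}
  | d i => {f i, terminal}
  | e i => {c i, d i}
  | f i => {b i, d i}

end Vertex

open Vertex

/-- The chain of `k` gadgets, with `ℓ ≥ 5k` and `ℓ_s = 2k`; its arcs are given by the
in-neighbours, since an out-tree is determined by the choice of one in-neighbour per vertex. -/
def gadgetChain (k : ℕ) : DirGraph (Vertex k) where
  verts := Set.univ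
  arcs := {a | a.1 ∈ a.2.inNbrs}

section GadgetChain

variable {k : ℕ} {u v r : Vertex k} {T : DirGraph (Vertex k)}

theorem gadgetChain_wellFormed : (gadgetChain k).WellFormed := by
  rintro ⟨u, v⟩ (h : u ∈ v.inNbrs)
  refine ⟨trivial, trivial, ?_⟩
  rintro (rfl : u = v)
  rcases u with i | i | i | i | i | i | i
  · cases i using Fin.cases <;> simp [inNbrs] at h
  all_goals simp [inNbrs] at h

theorem IsOutBranching.root_eq_port_zero (hT : IsOutBranching T (gadgetChain k) r) :
    r = port 0 := by
  by_contra hne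
  obtain ⟨u, hu, -⟩ := hT.1.1.existsUnique_adj (hT.2 ▸ trivial) (Ne.symm hne)
  exact hT.1.2.2 hu

theorem IsOutBranching.exists_mem_inNbrs_adj (hT : IsOutBranching T (gadgetChain k) r)
    (hv : v ≠ port 0) : ∃ u ∈ v.inNbrs, T.Adj u v := by
  obtain ⟨u, hu, -⟩ := hT.1.1.existsUnique_adj (hT.2 ▸ trivial) (hT.root_eq_port_zero ▸ hv)
  exact ⟨u, hT.1.2.2 hu, hu⟩

section Parents

variable (hT : IsOutBranching T (gadgetChain k) r) (i : Fin k)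
include hT

theorem IsOutBranching.adj_exit : T.Adj (e i) (exit i) := by
  simpa [inNbrs] using hT.exists_mem_inNbrs_adj (v := exit i) (by simp)

theorem IsOutBranching.adj_a : T.Adj (entry i) (a i) ∨ T.Adj terminal (a i) := by
  simpa [inNbrs] using hT.exists_mem_inNbrs_adj (v := a i) (by simp)

theorem IsOutBranching.adj_c : T.Adj (a i) (c i) ∨ T.Adj terminal (c i) := by
  simpa [inNbrs] using hT.exists_mem_inNbrs_adj (v := c i) (by simp)

theorem IsOutBranching.adj_b : T.Adj (entry i) (b i) ∨ T.Adj terminal (b i) := by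
  simpa [inNbrs] using hT.exists_mem_inNbrs_adj (v := b i) (by simp)

theorem IsOutBranching.adj_d : T.Adj (f i) (d i) ∨ T.Adj terminal (d i) := by
  simpa [inNbrs] using hT.exists_mem_inNbrs_adj (v := d i) (by simp)

theorem IsOutBranching.adj_e : T.Adj (c i) (e i) ∨ T.Adj (d i) (e i) := by
  simpa [inNbrs] using hT.exists_mem_inNbrs_adj (v := e i) (by simp)

theorem IsOutBranching.adj_f : T.Adj (b i) (f i) ∨ T.Adj (d i) (f i) := by
  simpa [inNbrs] using hT.exists_mem_inNbrs_adj (v := f i) (by simp)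

end Parents

/-- `T` contains the path from the entry of gadget `i` to `e i` through `a i` and `c i`. -/
structure ShortRoute (T : DirGraph (Vertex k)) (i : Fin k) : Prop where
  entry_a : T.Adj (entry i) (a i)
  a_c : T.Adj (a i) (c i)
  c_e : T.Adj (c i) (e i)

/-- `T` contains the path from the entry of gadget `i` to `e i` through `b i`, `f i` and `d i`. -/
structure LongRoute (T : DirGraph (Vertex k)) (i : Fin k) : Prop where
  entry_b : T.Adj (entry i) (b i)
  b_f : T.Adj (b i) (f i)
  f_d : T.Adj (f i) (d i)
  d_e : T.Adj (d i) (e i)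

section Routes

variable (hT : IsOutBranching T (gadgetChain k) r)
include hT

theorem IsOutBranching.route_of_exit_reaches_terminal {i : Fin k}
    (hexit : Relation.ReflTransGen T.Adj (exit i) terminal) : T.ShortRoute i ∨ T.LongRoute i := by
  have hacyclic := hT.1.1.isAcyclic
  have not_adj_of_reaches {v} (hv : Relation.ReflTransGen T.Adj v terminal) :
      ¬ T.Adj terminal v := fun h => hacyclic.not_reflTransGen h hv
  have he : Relation.ReflTransGen T.Adj (e i) terminal := .head (hT.adj_exit i) hexit
  obtain hce | hde := hT.adj_e i
  · have hc := he.head hce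
    have hac := (hT.adj_c i).resolve_right (not_adj_of_reaches hc)
    have hsa := (hT.adj_a i).resolve_right (not_adj_of_reaches (hc.head hac))
    exact .inl ⟨hsa, hac, hce⟩
  · have hd := he.head hde
    have hfd := (hT.adj_d i).resolve_right (not_adj_of_reaches hd)
    have hbf := (hT.adj_f i).resolve_right fun h => hacyclic.not_reflTransGen hfd (.single h)
    have hsb := (hT.adj_b i).resolve_right (not_adj_of_reaches ((hd.head hfd).head hbf))
    exact .inr ⟨hsb, hbf, hfd, hde⟩

theorem IsOutBranching.port_reaches_terminal (i : Fin (k + 1)) :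
    Relation.ReflTransGen T.Adj (port i) terminal := by
  induction i using Fin.reverseInduction with
  | last => exact .refl
  | cast i ih =>
    have he := ih.head (hT.adj_exit i)
    obtain h | h := hT.route_of_exit_reaches_terminal ih
    · exact ((he.head h.c_e).head h.a_c).head h.entry_a
    · exact (((he.head h.d_e).head h.f_d).head h.b_f).head h.entry_b

theorem IsOutBranching.route (i : Fin k) : T.ShortRoute i ∨ T.LongRoute i :=
  hT.route_of_exit_reaches_terminal (hT.port_reaches_terminal i.succ)

theorem IsOutBranching.eq_terminal_or_mem_innerVerts_of_mem_leaves (hv : v ∈ T.leaves) :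
    v = terminal ∨ ∃ i, v ∈ innerVerts i := by
  rcases v with j | i | i | i | i | i | i
  · refine .inl ?_
    obtain h | ⟨w, hw, -⟩ := (hT.port_reaches_terminal j).cases_head
    · exact h
    · exact absurd hv hw.notMem_leaves
  all_goals exact .inr ⟨i, by simp [innerVerts]⟩

theorem IsOutBranching.exists_leaves_inter_innerVerts_subset_pair (i : Fin k) :
    ∃ x y, T.leaves ∩ innerVerts i ⊆ {x, y} := by
  have he := (hT.adj_exit i).notMem_leaves
  obtain h | h := hT.route i
  · have ha := h.a_c.notMem_leaves
    have hc := h.c_e.notMem_leaves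
    obtain hbf | hdf := hT.adj_f i
    · have hb := hbf.notMem_leaves
      refine ⟨d i, f i, ?_⟩
      rintro _ ⟨hv, rfl | rfl | rfl | rfl | rfl | rfl⟩ <;> first | contradiction | simp
    · have hd := hdf.notMem_leaves
      refine ⟨b i, f i, ?_⟩
      rintro _ ⟨hv, rfl | rfl | rfl | rfl | rfl | rfl⟩ <;> first | contradiction | simp
  · have hb := h.b_f.notMem_leaves
    have hf := h.f_d.notMem_leaves
    have hd := h.d_e.notMem_leaves
    refine ⟨a i, c i, ?_⟩
    rintro _ ⟨hv, rfl | rfl | rfl | rfl | rfl | rfl⟩ <;> first | contradiction | simp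

theorem IsOutBranching.exists_leaves_inter_innerVerts_subset_singleton (hleaf : terminal ∈ T.leaves)
    (i : Fin k) : ∃ x, T.leaves ∩ innerVerts i ⊆ {x} := by
  have not_adj (v) : ¬ T.Adj terminal v := fun h => h.notMem_leaves hleaf
  have he := (hT.adj_exit i).notMem_leaves
  have hac := (hT.adj_c i).resolve_right (not_adj _)
  have hfd := (hT.adj_d i).resolve_right (not_adj _)
  have hbf := (hT.adj_f i).resolve_right fun h => hT.1.1.isAcyclic.not_reflTransGen hfd (.single h)
  have ha := hac.notMem_leaves
  have hf := hfd.notMem_leaves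
  have hb := hbf.notMem_leaves
  obtain hce | hde := hT.adj_e i
  · have hc := hce.notMem_leaves
    refine ⟨d i, ?_⟩
    rintro _ ⟨hv, rfl | rfl | rfl | rfl | rfl | rfl⟩ <;> first | contradiction | simp
  · have hd := hde.notMem_leaves
    refine ⟨c i, ?_⟩
    rintro _ ⟨hv, rfl | rfl | rfl | rfl | rfl | rfl⟩ <;> first | contradiction | simp

theorem IsOutBranching.ncard_leaves_le_of_terminal_mem (hleaf : terminal ∈ T.leaves) :
    T.leaves.ncard ≤ k + 1 := by
  choose x hx using hT.exists_leaves_inter_innerVerts_subset_singleton hleaf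
  have hsub : T.leaves ⊆ insert terminal (Set.range x) := by
    intro v hv
    obtain rfl | ⟨i, hi⟩ := hT.eq_terminal_or_mem_innerVerts_of_mem_leaves hv
    · exact Set.mem_insert _ _
    · exact .inr ⟨i, (hx i ⟨hv, hi⟩).symm⟩
  calc T.leaves.ncard ≤ (insert terminal (Set.range x)).ncard := Set.ncard_le_ncard hsub
    _ ≤ (Set.range x).ncard + 1 := Set.ncard_insert_le _ _
    _ ≤ k + 1 := by simpa using Finite.card_range_le x

theorem IsOutBranching.ncard_leaves_le_of_terminal_notMem (hleaf : terminal ∉ T.leaves) :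
    T.leaves.ncard ≤ k + k := by
  choose x y hxy using hT.exists_leaves_inter_innerVerts_subset_pair
  have hsub : T.leaves ⊆ Set.range x ∪ Set.range y := by
    intro v hv
    obtain rfl | ⟨i, hi⟩ := hT.eq_terminal_or_mem_innerVerts_of_mem_leaves hv
    · exact absurd hv hleaf
    · exact (hxy i ⟨hv, hi⟩).imp (fun h => ⟨i, h.symm⟩) fun h => ⟨i, h.symm⟩
  calc T.leaves.ncard ≤ (Set.range x ∪ Set.range y).ncard := Set.ncard_le_ncard hsub
    _ ≤ (Set.range x).ncard + (Set.range y).ncard := Set.ncard_union_le _ _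
    _ ≤ k + k := add_le_add (by simpa using Finite.card_range_le x)
        (by simpa using Finite.card_range_le y)

end Routes

theorem ellS_gadgetChain_le (hk : 1 ≤ k) : (gadgetChain k).ellS ≤ 2 * k := by
  refine ellS_le fun T r hT => ?_
  by_cases hleaf : terminal ∈ T.leaves
  · have := hT.ncard_leaves_le_of_terminal_mem hleaf
    omega
  · have := hT.ncard_leaves_le_of_terminal_notMem hleaf
    omega

theorem parentTree_isOutBranching_gadgetChain {p : Vertex k → Vertex k} (rank : Vertex k → ℕ)
    (hp : ∀ v ≠ port 0, p v ∈ v.inNbrs ∧ rank (p v) < rank v) :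
    IsOutBranching (parentTree Set.univ (port 0) p) (gadgetChain k) (port 0) :=
  ⟨parentTree_isOutTreeOf rank subset_rfl trivial fun v _ hv => ⟨trivial, hp v hv⟩, rfl⟩

/-- The parents in an out-branching that takes the short route in every gadget and reaches the
remaining inner vertices by `terminal → b → f → d`. -/
def shortParentViaB : Vertex k → Vertex k
  | port i => Fin.cases (port 0) e i
  | a i => entry i
  | b _ => terminal
  | c i => a i
  | d i => f i
  | e i => c i
  | f i => b i

/-- The parents in an out-branching that takes the short route in every gadget and reaches the
remaining inner vertices by `entry → b` and `terminal → d → f`. -/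
def shortParentViaD : Vertex k → Vertex k
  | port i => Fin.cases (port 0) e i
  | a i => entry i
  | b i => entry i
  | c i => a i
  | d _ => terminal
  | e i => c i
  | f i => d i

/-- The parents in an out-branching that takes the long route in every gadget, so that `a` and `c`
can be leaves attached to `terminal`. -/
def longParent : Vertex k → Vertex k
  | port i => Fin.cases (port 0) e i
  | a _ => terminal
  | b i => entry i
  | c _ => terminal
  | d i => f i
  | e i => d i
  | f i => b i

theorem shortParentViaB_isOutBranching :
    IsOutBranching (parentTree Set.univ (port 0) shortParentViaB) (gadgetChain k) (port 0) := by
  refine parentTree_isOutBranching_gadgetChain (fun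
    | port i => 4 * i
    | a i => 4 * i + 1
    | c i => 4 * i + 2
    | e i => 4 * i + 3
    | b _ => 4 * k + 1
    | f _ => 4 * k + 2
    | d _ => 4 * k + 3) fun v hv => ?_
  rcases v with i | i | i | i | i | i | i
  · cases i using Fin.cases with
    | zero => exact absurd rfl hv
    | succ i => simp [shortParentViaB, inNbrs, mul_add]
  all_goals simp [shortParentViaB, inNbrs]

theorem shortParentViaD_isOutBranching :
    IsOutBranching (parentTree Set.univ (port 0) shortParentViaD) (gadgetChain k) (port 0) := by
  refine parentTree_isOutBranching_gadgetChain (fun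
    | port i => 4 * i
    | a i => 4 * i + 1
    | b i => 4 * i + 1
    | c i => 4 * i + 2
    | e i => 4 * i + 3
    | d _ => 4 * k + 1
    | f _ => 4 * k + 2) fun v hv => ?_
  rcases v with i | i | i | i | i | i | i
  · cases i using Fin.cases with
    | zero => exact absurd rfl hv
    | succ i => simp [shortParentViaD, inNbrs, mul_add]
  all_goals simp [shortParentViaD, inNbrs]

theorem longParent_isOutBranching :
    IsOutBranching (parentTree Set.univ (port 0) longParent) (gadgetChain k) (port 0) := by
  refine parentTree_isOutBranching_gadgetChain (fun
    | port i => 5 * i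
    | b i => 5 * i + 1
    | f i => 5 * i + 2
    | d i => 5 * i + 3
    | e i => 5 * i + 4
    | a _ => 5 * k + 1
    | c _ => 5 * k + 1) fun v hv => ?_
  rcases v with i | i | i | i | i | i | i
  · cases i using Fin.cases with
    | zero => exact absurd rfl hv
    | succ i => simp [longParent, inNbrs, mul_add]
  all_goals simp [longParent, inNbrs]

theorem ne_port_zero_of_mem_inNbrs (h : u ∈ v.inNbrs) : v ≠ port 0 := by
  rintro rfl
  exact h

theorem eq_parent_of_mem_inNbrs (h : u ∈ v.inNbrs) :
    u = shortParentViaB v ∨ u = shortParentViaD v ∨ u = longParent v := by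
  rcases v with i | i | i | i | i | i | i
  · cases i using Fin.cases with
    | zero => exact h.elim
    | succ i => exact .inl h
  all_goals
    obtain rfl | rfl := h <;> simp [shortParentViaB, shortParentViaD, longParent]

theorem gadgetChain_not_useless {x : Vertex k × Vertex k} (hx : x ∈ (gadgetChain k).arcs) :
    ¬ Useless (gadgetChain k) x := by
  obtain ⟨u, v⟩ := x
  have hv := ne_port_zero_of_mem_inNbrs hx
  intro huseless
  obtain h | h | h := eq_parent_of_mem_inNbrs hx
  · exact huseless _ _ shortParentViaB_isOutBranching ⟨trivial, hv, h⟩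
  · exact huseless _ _ shortParentViaD_isOutBranching ⟨trivial, hv, h⟩
  · exact huseless _ _ longParent_isOutBranching ⟨trivial, hv, h⟩

theorem two_mul_le_ellS_gadgetChain : 2 * k ≤ (gadgetChain k).ellS := by
  refine le_trans ?_ longParent_isOutBranching.ncard_leaves_le_ellS
  let leaf : Fin k ⊕ Fin k → Vertex k := Sum.elim a c
  have hinj : leaf.Injective := by
    rintro (i | i) (j | j) <;> simp [leaf]
  have hleaves (x : Fin k ⊕ Fin k) :
      leaf x ∈ (parentTree Set.univ (port 0) longParent).leaves := by
    refine mem_leaves_parentTree_iff.2 ⟨trivial, fun w _ _ => ?_⟩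
    obtain i | i := x <;> rcases w with j | j | j | j | j | j | j
    any_goals cases j using Fin.cases
    all_goals simp [leaf, longParent]
  simpa [two_mul, Nat.card_coe_set_eq] using
    Nat.card_le_card_of_injective _ (hinj.codRestrict hleaves)

/-- The parents in an out-tree rooted at `terminal` that contains all inner vertices. -/
def terminalParent : Vertex k → Vertex k
  | e i => d i
  | f i => d i
  | _ => terminal

theorem terminalParent_isOutTreeOf :
    IsOutTreeOf (parentTree (insert terminal (⋃ i, innerVerts i)) terminal terminalParent)
      (gadgetChain k) terminal := by
  refine parentTree_isOutTreeOf (fun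
    | port _ => 0
    | a _ | b _ | c _ | d _ => 1
    | e _ | f _ => 2) (Set.subset_univ _) (Set.mem_insert _ _) ?_
  intro v hv hne
  obtain ⟨i, hv⟩ := Set.mem_iUnion.1 (hv.resolve_left hne)
  have hd : d i ∈ insert terminal (⋃ i, innerVerts i) :=
    .inr (Set.mem_iUnion_of_mem i (by simp [innerVerts]))
  obtain rfl | rfl | rfl | rfl | rfl | rfl := hv
  iterate 4 exact ⟨Set.mem_insert _ _, .inr rfl, zero_lt_one⟩
  iterate 2 exact ⟨hd, .inr rfl, one_lt_two⟩

theorem five_mul_le_ell_gadgetChain : 5 * k ≤ (gadgetChain k).ell := by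
  refine le_trans ?_ terminalParent_isOutTreeOf.ncard_leaves_le_ell
  let leaf : Fin 5 × Fin k → Vertex k := Function.uncurry ![a, b, c, e, f]
  have hinj : leaf.Injective := by
    rintro ⟨m, i⟩ ⟨n, j⟩
    fin_cases m <;> fin_cases n <;> simp [leaf]
  have hleaves (x : Fin 5 × Fin k) : leaf x ∈
      (parentTree (insert terminal (⋃ i, innerVerts i)) terminal terminalParent).leaves := by
    obtain ⟨m, i⟩ := x
    refine mem_leaves_parentTree_iff.2 ⟨.inr (Set.mem_iUnion_of_mem i ?_), fun w _ _ => ?_⟩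
    · fin_cases m <;> simp [leaf, innerVerts]
    · fin_cases m <;> cases w <;> simp [leaf, terminalParent]
  simpa [Nat.card_coe_set_eq] using
    Nat.card_le_card_of_injective _ (hinj.codRestrict hleaves)

end GadgetChain

theorem exists_digraph_ratio_two_point_five (k : ℕ) (hk : 1 ≤ k) :
    ∃ (n : ℕ) (D : DirGraph (Fin n)),
      D.WellFormed ∧ D.verts = Set.univ ∧
      (∃ (T : DirGraph (Fin n)) (r : Fin n), IsOutBranching T D r) ∧
      (∀ a ∈ D.arcs, ¬ Useless D a) ∧
      5 * k ≤ ell D ∧ ellS D = 2 * k := by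
  let index := (Finite.equivFin (Vertex k)).symm
  refine ⟨_, (gadgetChain k).comap index, gadgetChain_wellFormed.comap index, rfl,
    ⟨_, _, longParent_isOutBranching.comap index⟩, ?_, ?_, ?_⟩
  · exact fun a ha => not_useless_comap index (gadgetChain_not_useless ha)
  · rw [ell_comap]
    exact five_mul_le_ell_gadgetChain
  · rw [ellS_comap]
    exact (ellS_gadgetChain_le hk).antisymm two_mul_le_ellS_gadgetChain

end DirGraph
end
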